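/- arXiv:2010.11022 — 5 statements merged into one kernel-verified Lean document; each statement's English description precedes it below -/
import Mathlib

section
/- Let R be a commutative ring with a non-zero-divisor π such that R is π-adically complete and separated, and write R_0 = R/πR. Then base change along R → R_0 induces an equivalence from finite étale R-algebras to finite étale R_0-algebras; concretely: (i) for finite étale R-algebras B and C, the reduction map from R-algebra homomorphisms B → C to R_0-algebra homomorphisms B ⊗_R R_0 → C ⊗_R R_0 is bijective, and (ii) every finite étale R_0-algebra is isomorphic to B ⊗_R R_0 for some finite étale R-algebra B. (Proposition 2.5(2).) -/
open scoped TensorProduct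


theorem lift_etale_aux {R R₀ B₀ : Type u} [CommRing R] [CommRing R₀] [CommRing B₀]
    [Algebra R R₀] [Algebra R₀ B₀] [Algebra R B₀] [IsScalarTower R R₀ B₀]
    (hs : Function.Surjective (algebraMap R R₀)) [Algebra.Etale R₀ B₀] :
    ∃ (S : Type u) (_ : CommRing S) (_ : Algebra R S) (_ : Module.Flat R S) (f : S →ₐ[R] B₀),
      Function.Surjective f ∧
      RingHom.ker f = (RingHom.ker (algebraMap R R₀)).map (algebraMap R S) := by
  classical
  obtain ⟨ι, σ, _, _, P, -⟩ :=
    (Algebra.Etale.iff_isStandardSmoothOfRelativeDimension_zero (R := R₀) (S := B₀)).mp ‹_›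
  have : P.HasCoeffs R := ⟨fun x _ => hs x⟩
  let A := P.ModelOfHasCoeffs R
  let Q := P.toPreSubmersivePresentation.ofHasCoeffs R
  let J : A := Q.jacobian
  let S := Localization.Away J
  let N := (Algebra.PreSubmersivePresentation.localizationAway S J).comp Q
  have hN : IsUnit N.jacobian := by
    rw [Algebra.PreSubmersivePresentation.comp_jacobian_eq_jacobian_smul_jacobian,
      Algebra.smul_def, IsUnit.mul_iff]
    have : IsUnit (algebraMap A S J) := IsLocalization.Away.algebraMap_isUnit J
    refine ⟨this, ?_⟩
    rw [Algebra.PreSubmersivePresentation.localizationAway_jacobian]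
    exact this
  let N' : Algebra.SubmersivePresentation R S _ _ := ⟨N, hN⟩
  have : Algebra.IsStandardSmooth R S := N'.isStandardSmooth
  have hflat : Module.Flat R S := inferInstance
  -- the map from A
  let g : A →ₐ[R] B₀ := ((P.tensorModelOfHasCoeffsHom R).restrictScalars R).comp
    (Algebra.TensorProduct.includeRight)
  have hgmk : ∀ p : MvPolynomial ι R, g (Ideal.Quotient.mk _ p) =
      MvPolynomial.aeval P.val (MvPolynomial.map (algebraMap R R₀) p) := by
    intro p
    rw [MvPolynomial.aeval_map_algebraMap]
    change P.tensorModelOfHasCoeffsHom R ((1 : R₀) ⊗ₜ[R] _) = _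
    rw [P.tensorModelOfHasCoeffsHom_tmul, map_one, one_mul]
  have hg : Function.Surjective g := by
    intro b
    obtain ⟨p₀, rfl⟩ := P.algebraMap_surjective b
    obtain ⟨p, rfl⟩ := MvPolynomial.map_surjective _ hs p₀
    refine ⟨Ideal.Quotient.mk _ p, ?_⟩
    rw [hgmk]
    exact (P.toGenerators.algebraMap_apply _).symm
  have hker : RingHom.ker g = (RingHom.ker (algebraMap R R₀)).map (algebraMap R A) := by
    apply le_antisymm
    · intro a ha
      obtain ⟨p, rfl⟩ := Ideal.Quotient.mk_surjective a
      rw [RingHom.mem_ker] at ha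
      replace ha := (hgmk p).symm.trans ha
      have hm : MvPolynomial.map (algebraMap R R₀) p ∈ P.ker := by
        rw [Algebra.Generators.ker_eq_ker_aeval_val]
        exact ha
      rw [← P.span_range_relation_eq_ker] at hm
      cases nonempty_fintype σ
      rw [Ideal.mem_span_range_iff_exists_fun] at hm
      obtain ⟨c, hc⟩ := hm
      choose c' hc' using fun i => MvPolynomial.map_surjective _ hs (c i)
      have h0 : p - ∑ i, c' i * P.relationOfHasCoeffs R i ∈
          RingHom.ker (MvPolynomial.map (σ := ι) (algebraMap R R₀)) := by
        rw [RingHom.mem_ker, map_sub, map_sum, ← hc, sub_eq_zero]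
        refine Finset.sum_congr rfl fun i _ => ?_
        rw [map_mul, hc', P.map_relationOfHasCoeffs]
      rw [MvPolynomial.ker_map] at h0
      have h1 := Ideal.mem_map_of_mem
        (Ideal.Quotient.mk (Ideal.span <| Set.range (P.relationOfHasCoeffs R))) h0
      rw [Ideal.map_map, map_sub, map_sum] at h1
      have h2 : ∑ i, Ideal.Quotient.mk (Ideal.span <| Set.range (P.relationOfHasCoeffs R))
          (c' i * P.relationOfHasCoeffs R i) = 0 := by
        refine Finset.sum_eq_zero fun i _ => ?_
        rw [Ideal.Quotient.eq_zero_iff_mem]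
        exact Ideal.mul_mem_left _ _ (Ideal.subset_span ⟨i, rfl⟩)
      rw [h2, sub_zero] at h1
      exact h1
    · rw [Ideal.map_le_iff_le_comap]
      intro r hr
      rw [Ideal.mem_comap, RingHom.mem_ker, AlgHom.commutes, IsScalarTower.algebraMap_apply R R₀ B₀,
        (RingHom.mem_ker).mp hr, map_zero]
  have hJ : IsUnit (g J) := by
    have h1 : J = Ideal.Quotient.mk _ (P.jacobianOfHasCoeffs R) := by
      cases nonempty_fintype σ
      simp only [J]
      rw [Algebra.PreSubmersivePresentation.jacobian_eq_jacobiMatrix_det]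
      simp only [Algebra.SubmersivePresentation.jacobianOfHasCoeffs]
      convert! rfl
    rw [h1]
    have := P.aeval_jacobianOfHasCoeffs R
    rw [hgmk, MvPolynomial.aeval_map_algebraMap, this]
    exact P.jacobian_isUnit
  let f : S →ₐ[R] B₀ := IsLocalization.liftAlgHom (M := Submonoid.powers J) (f := g) (by
    rintro ⟨_, n, rfl⟩
    simpa using hJ.pow n)
  have hf : ∀ a, f (algebraMap A S a) = g a := fun a => by simp [f]
  refine ⟨S, inferInstance, inferInstance, hflat, f, ?_, ?_⟩
  · intro b
    obtain ⟨a, rfl⟩ := hg b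
    exact ⟨algebraMap A S a, hf a⟩
  · apply le_antisymm
    · intro x hx
      obtain ⟨a, ⟨_, n, rfl⟩, rfl⟩ := IsLocalization.exists_mk'_eq (Submonoid.powers J) x
      have hu : IsUnit (algebraMap A S (J ^ n)) :=
        IsLocalization.map_units S (⟨J ^ n, n, rfl⟩ : Submonoid.powers J)
      have h1 : IsLocalization.mk' S a (⟨J ^ n, n, rfl⟩ : Submonoid.powers J) *
        algebraMap A S (J ^ n) = algebraMap A S a := IsLocalization.mk'_spec S a _
      have h2 : a ∈ RingHom.ker g := by
        rw [RingHom.mem_ker]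
        rw [← hf, ← h1, map_mul, (RingHom.mem_ker).mp hx, zero_mul]
      rw [hker] at h2
      have h3 := Ideal.mem_map_of_mem (algebraMap A S) h2
      rw [Ideal.map_map, ← IsScalarTower.algebraMap_eq, ← h1] at h3
      exact (Ideal.mul_unit_mem_iff_mem _ hu).mp h3
    · rw [Ideal.map_le_iff_le_comap]
      intro r hr
      rw [Ideal.mem_comap, RingHom.mem_ker, AlgHom.commutes, IsScalarTower.algebraMap_apply R R₀ B₀,
        (RingHom.mem_ker).mp hr, map_zero]

theorem completion_aux {R B₀ S : Type u} [CommRing R] [CommRing B₀] [CommRing S] [Algebra R S]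
    [Algebra R B₀] (π : R) (hπ : ∀ s : S, π • s = 0 → s = 0) (f : S →ₐ[R] B₀)
    (hf : Function.Surjective f) (hk : RingHom.ker f = Ideal.span {algebraMap R S π}) :
    ∃ (B : Type u) (_ : CommRing B) (_ : Algebra R B) (g : B →ₐ[R] B₀),
      Function.Surjective g ∧ RingHom.ker g = Ideal.span {algebraMap R B π} ∧
      IsHausdorff (Ideal.span {π}) B ∧ ∀ b : B, π • b = 0 → b = 0 := by
  set I : Ideal S := Ideal.span {algebraMap R S π} with hI
  have hfg : I.FG := ⟨{algebraMap R S π}, by simp [hI]⟩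
  let e : (S ⧸ I) →ₐ[R] B₀ := Ideal.Quotient.liftₐ I f (fun a ha => by
    rw [← hk] at ha; exact ha)
  have he : Function.Injective e := by
    rw [injective_iff_map_eq_zero]
    intro x hx
    obtain ⟨s, rfl⟩ := Ideal.Quotient.mk_surjective x
    rw [Ideal.Quotient.eq_zero_iff_mem, ← hk]
    exact hx
  have hes : Function.Surjective e := fun b => by
    obtain ⟨s, rfl⟩ := hf b
    exact ⟨Ideal.Quotient.mk I s, rfl⟩
  let g : AdicCompletion I S →ₐ[R] B₀ := e.comp ((AdicCompletion.evalOneₐ I).restrictScalars R)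
  have hg : ∀ x, g x = e (AdicCompletion.evalOneₐ I x) := fun _ => rfl
  have hmap : I.map (algebraMap S (AdicCompletion I S)) =
      Ideal.span {algebraMap R (AdicCompletion I S) π} := by
    rw [hI, Ideal.map_span, Set.image_singleton, ← IsScalarTower.algebraMap_apply]
  refine ⟨AdicCompletion I S, inferInstance, inferInstance, g, ?_, ?_, ?_, ?_⟩
  · exact hes.comp (AdicCompletion.evalOneₐ_surjective I)
  · rw [← hmap, ← AdicCompletion.ker_evalOneₐ_eq_map I hfg]
    ext x
    rw [RingHom.mem_ker, RingHom.mem_ker, hg]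
    exact map_eq_zero_iff e he
  · have h1 : IsHausdorff I (AdicCompletion I S) := inferInstance
    refine IsHausdorff.map_algebraMap_iff.mp (?_ : IsHausdorff ((Ideal.span {π}).map (algebraMap R S)) _)
    rwa [Ideal.map_span, Set.image_singleton]
  · intro x hx
    obtain ⟨c, rfl⟩ := AdicCompletion.mk_surjective I S x
    apply AdicCompletion.ext_evalₐ
    intro n
    have hpow : I ^ (n+1) = Ideal.span {algebraMap R S π ^ (n+1)} := by
      rw [hI, Ideal.span_singleton_pow]
    have h1 : AdicCompletion.evalₐ I (n+1) (π • AdicCompletion.mk I S c) = 0 := by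
      rw [hx, map_zero]
    have h2 : π • AdicCompletion.mk I S c = algebraMap R S π • AdicCompletion.mk I S c := by
      rw [algebraMap_smul]
    rw [h2, map_smul, AdicCompletion.evalₐ_mk, ← Ideal.Quotient.mk_eq_mk,
      ← Submodule.Quotient.mk_smul, Ideal.Quotient.mk_eq_mk, Ideal.Quotient.eq_zero_iff_mem,
      hpow, Ideal.mem_span_singleton'] at h1
    obtain ⟨z, hz⟩ := h1
    have h3 : c (n+1) - z * algebraMap R S π ^ n = 0 := by
      apply hπ
      rw [smul_sub, Algebra.smul_def, Algebra.smul_def, sub_eq_zero]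
      rw [smul_eq_mul] at hz
      refine hz.symm.trans ?_
      ring
    rw [AdicCompletion.evalₐ_mk, map_zero, Ideal.Quotient.eq_zero_iff_mem]
    have h4 : c (n+1) ∈ I ^ n := by
      rw [sub_eq_zero.mp h3]
      exact Ideal.mul_mem_left _ _ (Ideal.pow_mem_pow (Ideal.mem_span_singleton_self _) n)
    have h5 : c n ≡ c (n+1) [SMOD (I ^ n • ⊤ : Submodule S S)] := c.2 (Nat.le_succ n)
    rw [SModEq.sub_mem, smul_eq_mul, Ideal.mul_top] at h5
    have := Ideal.add_mem _ h5 h4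
    simpa using this

theorem map_mem_smul_top_aux {R M N : Type*} [CommRing R] [AddCommGroup M] [Module R M]
    [AddCommGroup N] [Module R N] (J : Ideal R) (f : M →ₗ[R] N) {x : M}
    (hx : x ∈ (J • ⊤ : Submodule R M)) : f x ∈ (J • ⊤ : Submodule R N) := by
  have := Submodule.mem_map_of_mem (f := f) hx
  rw [Submodule.map_smul''] at this
  exact Submodule.smul_mono le_rfl le_top this

theorem isAdicComplete_pi_aux {R : Type*} [CommRing R] (I : Ideal R) [hR : IsAdicComplete I R]
    (n : ℕ) : IsAdicComplete I (Fin n → R) := by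
  have hh : IsHausdorff I (Fin n → R) := by
    refine ⟨fun x hx => funext fun i => ?_⟩
    refine IsHausdorff.haus (inferInstance : IsHausdorff I R) _ fun k => ?_
    have := hx k
    rw [SModEq.zero] at this ⊢
    exact map_mem_smul_top_aux _ (LinearMap.proj i : (Fin n → R) →ₗ[R] R) this
  have hp : IsPrecomplete I (Fin n → R) := by
    refine ⟨fun f hf => ?_⟩
    have h1 : ∀ i, ∃ L : R, ∀ k, f k i ≡ L [SMOD (I ^ k • ⊤ : Submodule R R)] := fun i =>
      IsPrecomplete.prec (inferInstance : IsPrecomplete I R) (f := fun k => f k i) fun {k l} hkl => by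
        have := hf hkl
        rw [SModEq.sub_mem] at this ⊢
        exact map_mem_smul_top_aux _ (LinearMap.proj i : (Fin n → R) →ₗ[R] R) this
    choose L hL using h1
    refine ⟨L, fun k => ?_⟩
    rw [SModEq.sub_mem, pi_eq_sum_univ (f k - L)]
    refine Submodule.sum_mem _ fun i _ => ?_
    have := hL i k
    rw [SModEq.sub_mem] at this
    exact map_mem_smul_top_aux _ (LinearMap.toSpanSingleton R (Fin n → R) _) this
  exact ⟨⟩

theorem isAdicComplete_retract_aux {R M N : Type*} [CommRing R] [AddCommGroup M] [Module R M]
    [AddCommGroup N] [Module R N] (I : Ideal R) [IsAdicComplete I M] (i : N →ₗ[R] M)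
    (r : M →ₗ[R] N) (h : ∀ x, r (i x) = x) : IsAdicComplete I N := by
  have hh : IsHausdorff I N := by
    refine ⟨fun x hx => ?_⟩
    rw [← h x, IsHausdorff.haus (inferInstance : IsHausdorff I M) (i x) fun k => ?_, map_zero]
    have := hx k
    rw [SModEq.zero] at this ⊢
    exact map_mem_smul_top_aux _ i this
  have hp : IsPrecomplete I N := by
    refine ⟨fun f hf => ?_⟩
    obtain ⟨L, hL⟩ := IsPrecomplete.prec (inferInstance : IsPrecomplete I M)
      (f := fun k => i (f k)) fun {k l} hkl => by
        have := hf hkl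
        rw [SModEq.sub_mem] at this ⊢
        rw [← map_sub]
        exact map_mem_smul_top_aux _ i this
    refine ⟨r L, fun k => ?_⟩
    have := hL k
    rw [SModEq.sub_mem] at this ⊢
    rw [← h (f k), ← map_sub]
    exact map_mem_smul_top_aux _ r this
  exact ⟨⟩

theorem isAdicComplete_of_finite_projective {R M : Type*} [CommRing R] [AddCommGroup M] [Module R M]
    (I : Ideal R) [hR : IsAdicComplete I R] [Module.Finite R M] [Module.Projective R M] :
    IsAdicComplete I M := by
  obtain ⟨n, p, hp⟩ := Module.Finite.exists_fin' R M
  obtain ⟨s, hs⟩ := Module.projective_lifting_property p LinearMap.id hp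
  have := isAdicComplete_pi_aux I n
  exact isAdicComplete_retract_aux I s p fun x => LinearMap.congr_fun hs x

/-- A Hausdorff module that is finite modulo `I` is finite. -/
theorem finite_of_adic {R M M₀ : Type*} [CommRing R] [AddCommGroup M] [Module R M]
    [AddCommGroup M₀] [Module R M₀]
    (I : Ideal R) [hR : IsAdicComplete I R] [IsHausdorff I M] (g : M →ₗ[R] M₀)
    (hg : Function.Surjective g) (hk : LinearMap.ker g ≤ I • ⊤) [Module.Finite R M₀] :
    Module.Finite R M := by
  obtain ⟨n, p, hp⟩ := Module.Finite.exists_fin' R M₀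
  obtain ⟨q, hq⟩ := Module.projective_lifting_property g p hg
  have := isAdicComplete_pi_aux I n
  refine Module.Finite.of_surjective q (surjective_of_mkQ_comp_surjective (I := I) ?_)
  intro x
  obtain ⟨y, rfl⟩ := Submodule.mkQ_surjective _ x
  obtain ⟨z, hz⟩ := hp (g y)
  refine ⟨z, ?_⟩
  simp only [LinearMap.comp_apply, Submodule.mkQ_apply]
  rw [Submodule.Quotient.eq]
  apply hk
  rw [LinearMap.mem_ker, map_sub, ← hz, ← hq, LinearMap.comp_apply, sub_self]

theorem projective_of_adic {R M M₀ : Type*} [CommRing R] [AddCommGroup M] [Module R M]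
    (π : R) (I : Ideal R) (hI : I = Ideal.span {π}) [hR : IsAdicComplete I R]
    [AddCommGroup M₀] [Module R M₀] [Module (R ⧸ I) M₀]
    [IsScalarTower R (R ⧸ I) M₀]
    (g : M →ₗ[R] M₀)
    (hg : Function.Surjective g) (hk : ∀ x, g x = 0 → ∃ y, x = π • y)
    (hk' : ∀ x, g (π • x) = 0) (hπ : ∀ x : M, π • x = 0 → x = 0)
    [Module.Finite R M] [Module.Projective (R ⧸ I) M₀] :
    Module.Projective R M := by
  obtain ⟨n, p, hp⟩ := Module.Finite.exists_fin' R M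
  have hF := isAdicComplete_pi_aux I n
  set F := Fin n → R
  have hmem : ∀ {N : Type _} [AddCommGroup N] [Module R N] (x : N),
      x ∈ (I • ⊤ : Submodule R N) ↔ ∃ y, π • y = x := fun x => by
    rw [hI, Submodule.ideal_span_singleton_smul, Submodule.mem_smul_pointwise_iff_exists]
    simp
  -- reduction of `p`
  let p₀' : (F ⧸ (I • ⊤ : Submodule R F)) →ₗ[R] M₀ := Submodule.liftQ _ (g ∘ₗ p) (fun x hx => by
    obtain ⟨y, rfl⟩ := (hmem x).mp hx
    rw [LinearMap.mem_ker, LinearMap.comp_apply, map_smul, hk'])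
  let p₀ : (F ⧸ (I • ⊤ : Submodule R F)) →ₗ[R ⧸ I] M₀ :=
    LinearMap.extendScalarsOfSurjective Ideal.Quotient.mk_surjective p₀'
  have hp₀ : ∀ x, p₀ (Submodule.Quotient.mk x) = g (p x) := fun _ => rfl
  have hp₀s : Function.Surjective p₀ := fun m => by
    obtain ⟨m, rfl⟩ := hg m
    obtain ⟨x, rfl⟩ := hp m
    exact ⟨Submodule.Quotient.mk x, rfl⟩
  obtain ⟨s₀, hs₀⟩ := Module.projective_lifting_property p₀ LinearMap.id hp₀s
  obtain ⟨t', ht'⟩ := Module.projective_lifting_property (Submodule.mkQ (I • ⊤ : Submodule R F))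
    ((s₀.restrictScalars R) ∘ₗ g ∘ₗ p) (Submodule.mkQ_surjective _)
  have ht'1 : ∀ x, (Submodule.Quotient.mk (t' x) : F ⧸ (I • ⊤ : Submodule R F)) = s₀ (g (p x)) :=
    fun x => LinearMap.congr_fun ht' x
  have ht'2 : ∀ x, g (p (t' x)) = g (p x) := fun x => by
    rw [← hp₀, ht'1]
    exact LinearMap.congr_fun hs₀ _
  have hrange : ∀ x, (p - p ∘ₗ t') x ∈ LinearMap.range (π • p) := fun x => by
    obtain ⟨y, hy⟩ := hk ((p - p ∘ₗ t') x) (by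
      rw [LinearMap.sub_apply, map_sub, LinearMap.comp_apply, ht'2, sub_self])
    obtain ⟨z, rfl⟩ := hp y
    exact ⟨z, by rw [hy]; rfl⟩
  obtain ⟨u, hu⟩ := Module.projective_lifting_property (π • p).rangeRestrict
    (LinearMap.codRestrict _ (p - p ∘ₗ t') hrange) (LinearMap.surjective_rangeRestrict _)
  have hu1 : ∀ x, π • p (u x) = p x - p (t' x) := fun x =>
    congrArg Subtype.val (LinearMap.congr_fun hu x)
  set K := LinearMap.ker p with hK
  let r : F →ₗ[R] K := LinearMap.codRestrict K (LinearMap.id - t' - π • u) (fun x => by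
    simp only [hK, LinearMap.mem_ker, LinearMap.sub_apply, map_sub, LinearMap.smul_apply, map_smul,
      hu1, LinearMap.id_apply, sub_self])
  have hr : ∀ x, (r x : F) = x - t' x - π • u x := fun x => rfl
  have hrK : ∀ x : K, ∃ y : K, π • y = r x - x := by
    intro x
    have h1 : t' x ∈ (I • ⊤ : Submodule R F) := by
      rw [← Submodule.Quotient.mk_eq_zero, ht'1, (LinearMap.mem_ker).mp x.2, map_zero, map_zero]
    obtain ⟨y, hy⟩ := (hmem _).mp h1
    have h2 : π • (- y - u x) = r x - x := by
      rw [hr, ← hy, smul_sub, smul_neg]; abel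
    refine ⟨⟨- y - u x, ?_⟩, Subtype.ext h2⟩
    apply hπ
    rw [← map_smul, h2, map_sub, (LinearMap.mem_ker).mp x.2, (LinearMap.mem_ker).mp (r x).2, sub_self]
  have hKH : IsHausdorff I K := by
    refine ⟨fun x hx => Subtype.ext ?_⟩
    refine IsHausdorff.haus (inferInstance : IsHausdorff I F) _ fun k => ?_
    have := hx k
    rw [SModEq.zero] at this ⊢
    exact map_mem_smul_top_aux _ K.subtype this
  have hrs : Function.Surjective r := by
    refine surjective_of_mkQ_comp_surjective (I := I) fun x => ?_
    obtain ⟨y, rfl⟩ := Submodule.mkQ_surjective _ x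
    refine ⟨y, ?_⟩
    simp only [LinearMap.comp_apply, Submodule.mkQ_apply]
    rw [Submodule.Quotient.eq, hmem]
    exact hrK y
  have hKf : Module.Finite R K := Module.Finite.of_surjective r hrs
  have hcs : Function.Surjective (r ∘ₗ K.subtype) := by
    rw [← LinearMap.range_eq_top, eq_top_iff]
    refine Submodule.le_of_le_smul_of_le_jacobson_bot (I := I) Module.Finite.fg_top
      (IsAdicComplete.le_jacobson_bot I) ?_
    intro x _
    obtain ⟨y, hy⟩ := hrK x
    have : x = r x - π • y := by rw [hy, sub_sub_cancel]
    rw [this]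
    refine Submodule.sub_mem _ (Submodule.mem_sup_left ⟨x, rfl⟩) (Submodule.mem_sup_right ?_)
    exact (hmem _).mpr ⟨y, rfl⟩
  have hci : Function.Injective (r ∘ₗ K.subtype) :=
    OrzechProperty.injective_of_surjective_endomorphism _ hcs
  let E := LinearEquiv.ofBijective (r ∘ₗ K.subtype) ⟨hci, hcs⟩
  let ρ : F →ₗ[R] K := E.symm.toLinearMap ∘ₗ r
  have hρ : ∀ x : K, ρ x = x := fun x => E.symm_apply_apply x
  let σ' : (F ⧸ K) →ₗ[R] F := K.liftQ (LinearMap.id - K.subtype ∘ₗ ρ) (fun x hx => by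
    rw [LinearMap.mem_ker, LinearMap.sub_apply, LinearMap.comp_apply, hρ ⟨x, hx⟩]
    exact sub_self x)
  let q := LinearMap.quotKerEquivOfSurjective p hp
  refine Module.Projective.of_split (σ' ∘ₗ q.symm.toLinearMap) p ?_
  ext m
  obtain ⟨x, rfl⟩ := hp m
  have hq : q.symm (p x) = Submodule.Quotient.mk x := by
    rw [LinearEquiv.symm_apply_eq]; rfl
  simp only [LinearMap.comp_apply, LinearEquiv.coe_coe, LinearMap.id_apply]
  rw [hq]
  change p (x - (ρ x : F)) = p x
  rw [map_sub, (LinearMap.mem_ker).mp (ρ x).2, sub_zero]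

theorem reduction_equiv_aux {R B B₀ : Type*} [CommRing R] [CommRing B] [CommRing B₀]
    (I : Ideal R) [Algebra R B] [Algebra R B₀] [Algebra (R ⧸ I) B₀]
    [IsScalarTower R (R ⧸ I) B₀] (g : B →ₐ[R] B₀)
    (hg : Function.Surjective g) (hk : RingHom.ker g = I.map (algebraMap R B)) :
    ∃ e : ((R ⧸ I) ⊗[R] B) ≃ₐ[R ⧸ I] B₀, ∀ b, e (1 ⊗ₜ b) = g b := by
  let φ : ((R ⧸ I) ⊗[R] B) →ₐ[R ⧸ I] B₀ :=
    Algebra.TensorProduct.lift (Algebra.ofId (R ⧸ I) B₀) g (fun _ _ => Commute.all _ _)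
  have hφ : ∀ b, φ (1 ⊗ₜ b) = g b := fun b => by
    change Algebra.TensorProduct.lift _ _ _ _ = _
    rw [Algebra.TensorProduct.lift_tmul, map_one, one_mul]
  have hs : ∀ x : (R ⧸ I) ⊗[R] B, ∃ b : B, 1 ⊗ₜ b = x := by
    intro x
    induction x using TensorProduct.induction_on with
    | zero => exact ⟨0, TensorProduct.tmul_zero _ _⟩
    | tmul r b =>
      obtain ⟨r, rfl⟩ := Ideal.Quotient.mk_surjective r
      refine ⟨r • b, ?_⟩
      rw [TensorProduct.tmul_smul, TensorProduct.smul_tmul', ← Ideal.Quotient.mk_eq_mk,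
        Algebra.smul_def, mul_one]
      rfl
    | add x y hx hy =>
      obtain ⟨a, rfl⟩ := hx
      obtain ⟨b, rfl⟩ := hy
      exact ⟨a + b, TensorProduct.tmul_add _ _ _⟩
  have h0 : ∀ b ∈ I.map (algebraMap R B), (1 : R ⧸ I) ⊗ₜ[R] b = 0 := by
    intro b hb
    have : I.map (algebraMap R B) ≤
        RingHom.ker (Algebra.TensorProduct.includeRight : B →ₐ[R] (R ⧸ I) ⊗[R] B) := by
      rw [Ideal.map_le_iff_le_comap]
      intro r hr
      rw [Ideal.mem_comap, RingHom.mem_ker, AlgHom.commutes,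
        IsScalarTower.algebraMap_apply R (R ⧸ I), Ideal.Quotient.algebraMap_eq,
        Ideal.Quotient.eq_zero_iff_mem.mpr hr, map_zero]
    exact this hb
  refine ⟨AlgEquiv.ofBijective φ ⟨?_, ?_⟩, hφ⟩
  · rw [injective_iff_map_eq_zero]
    intro x hx
    obtain ⟨b, rfl⟩ := hs x
    rw [hφ] at hx
    apply h0
    rw [← hk]
    exact hx
  · intro y
    obtain ⟨b, rfl⟩ := hg y
    exact ⟨_, hφ b⟩

theorem etale_of_adic {R B : Type u} [CommRing R] [CommRing B]
    (I : Ideal R) [IsAdicComplete I R] [Algebra R B] [Module.Finite R B] [Module.Projective R B]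
    (h : Algebra.Etale (R ⧸ I) ((R ⧸ I) ⊗[R] B)) : Algebra.Etale R B := by
  have : Module.FinitePresentation R B := Module.finitePresentation_of_projective R B
  have : Algebra.FinitePresentation R B := inferInstance
  have hfin : Module.Finite R (Ω[B⁄R]) := Module.Finite.trans B _
  letI : Algebra B ((R ⧸ I) ⊗[R] B) := Algebra.TensorProduct.rightAlgebra
  have hsub : Subsingleton (Ω[((R ⧸ I) ⊗[R] B)⁄(R ⧸ I)]) := inferInstance
  have h1 : Subsingleton ((R ⧸ I) ⊗[R] Ω[B⁄R]) :=
    (KaehlerDifferential.tensorKaehlerEquivBase R (R ⧸ I) B ((R ⧸ I) ⊗[R] B)).toEquiv.subsingleton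
  have h2 : Subsingleton (Ω[B⁄R] ⧸ (I • ⊤ : Submodule R (Ω[B⁄R]))) :=
    (TensorProduct.quotTensorEquivQuotSMul (Ω[B⁄R]) I).symm.toEquiv.subsingleton
  rw [Submodule.Quotient.subsingleton_iff] at h2
  have h3 : (⊤ : Submodule R (Ω[B⁄R])) = ⊥ :=
    Submodule.eq_bot_of_le_smul_of_le_jacobson_bot I ⊤ Module.Finite.fg_top h2.ge
      (IsAdicComplete.le_jacobson_bot I)
  have h4 : Subsingleton (Ω[B⁄R]) := (Submodule.subsingleton_iff R).mp (subsingleton_of_bot_eq_top h3.symm)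
  have : Algebra.FormallyUnramified R B := ⟨h4⟩
  exact Algebra.Etale.of_formallyUnramified_of_flat

theorem reduction_bijective_aux {R B C : Type u} [CommRing R] [CommRing B] [CommRing C]
    (I : Ideal R) [IsAdicComplete I R] [Algebra R B] [Algebra R C]
    [Module.Finite R C] [Algebra.Etale R B] [Algebra.Etale R C] :
    Function.Bijective
      (fun f : B →ₐ[R] C =>
        (Algebra.TensorProduct.map (AlgHom.id (R ⧸ I) (R ⧸ I)) f :
          ((R ⧸ I) ⊗[R] B) →ₐ[R ⧸ I] ((R ⧸ I) ⊗[R] C))) := by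
  have hfp : Module.FinitePresentation R C := by
    have : Algebra.FinitePresentation R C := inferInstance
    exact (Module.FinitePresentation.iff_finitePresentation_of_finite _ _).mpr this
  have hfl : Module.Flat R C := Algebra.Smooth.flat R C
  have hpr : Module.Projective R C := Module.Flat.projective_of_finitePresentation
  have hc : IsAdicComplete I C := isAdicComplete_of_finite_projective I
  have hc' : IsAdicComplete (I.map (algebraMap R C)) C :=
    (IsAdicComplete.map_algebraMap_iff _ _).mpr hc
  obtain ⟨e, he⟩ := reduction_equiv_aux I
    (Ideal.Quotient.mkₐ R (I.map (algebraMap R C))) (Ideal.Quotient.mkₐ_surjective R _)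
    (Ideal.Quotient.mkₐ_ker R _)
  constructor
  · intro f₁ f₂ h
    refine Algebra.FormallyUnramified.ext_of_iInf (I.map (algebraMap R C)) ?_ fun x => ?_
    · have := IsHausdorff.iInf_pow_smul (inferInstance : IsHausdorff (I.map (algebraMap R C)) C)
      simpa using this
    · have h1 := AlgHom.congr_fun h ((1 : R ⧸ I) ⊗ₜ[R] x)
      simp only [Algebra.TensorProduct.map_tmul] at h1
      have h2 := congrArg e h1
      rw [AlgHom.id_apply, he, he] at h2
      exact h2
  · intro h
    let f₀ : B →ₐ[R] C ⧸ I.map (algebraMap R C) :=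
      ((e.toAlgHom.comp h).restrictScalars R).comp Algebra.TensorProduct.includeRight
    obtain ⟨f, hf⟩ := Algebra.FormallySmooth.exists_mkₐ_comp_eq_of_isAdicComplete f₀
    refine ⟨f, ?_⟩
    apply Algebra.TensorProduct.ext
    · ext
    · ext x
      apply e.injective
      have h1 := AlgHom.congr_fun hf x
      change e (Algebra.TensorProduct.map (AlgHom.id (R ⧸ I) (R ⧸ I)) f (1 ⊗ₜ x)) = e (h (1 ⊗ₜ x))
      rw [Algebra.TensorProduct.map_tmul, AlgHom.id_apply, he]
      exact h1

theorem exists_lift_aux {R B₀ : Type u} [CommRing R] (π : R) (hπ : π ∈ nonZeroDivisors R)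
    (I : Ideal R) (hI : I = Ideal.span {π}) [IsAdicComplete I R] [CommRing B₀] [Algebra (R ⧸ I) B₀]
    [Module.Finite (R ⧸ I) B₀] [Algebra.Etale (R ⧸ I) B₀] :
    ∃ (B : Type u) (_ : CommRing B) (_ : Algebra R B),
      Module.Finite R B ∧ Algebra.Etale R B ∧
        Nonempty (((R ⧸ I) ⊗[R] B) ≃ₐ[R ⧸ I] B₀) := by
  letI : Algebra R B₀ := ((algebraMap (R ⧸ I) B₀).comp (algebraMap R (R ⧸ I))).toAlgebra
  haveI : IsScalarTower R (R ⧸ I) B₀ := IsScalarTower.of_algebraMap_eq' rfl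
  obtain ⟨S, _, _, _, f, hf, hk⟩ := lift_etale_aux (R := R) (R₀ := R ⧸ I) (B₀ := B₀)
    Ideal.Quotient.mk_surjective
  have hmap : ∀ (A : Type u) [CommRing A] [Algebra R A],
      I.map (algebraMap R A) = Ideal.span {algebraMap R A π} := fun A _ _ => by
    rw [hI, Ideal.map_span, Set.image_singleton]
  have hk2 : RingHom.ker f = Ideal.span {algebraMap R S π} := by
    rw [hk, ← hmap, Ideal.Quotient.algebraMap_eq, Ideal.mk_ker]
  have hreg : IsSMulRegular R π := by
    intro a b hab
    exact mul_cancel_left_mem_nonZeroDivisors hπ |>.mp hab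
  have hS : ∀ s : S, π • s = 0 → s = 0 := fun s hs => by
    have : IsSMulRegular S (algebraMap R S π) := hreg.of_flat
    refine this ?_
    change algebraMap R S π • s = algebraMap R S π • 0
    rw [smul_zero, algebraMap_smul]
    exact hs
  obtain ⟨B, _, _, g, hg, hgk, hH, htf⟩ := completion_aux π hS f hf hk2
  rw [← hI] at hH
  have hfin₀ : Module.Finite R B₀ := by
    have : Module.Finite R (R ⧸ I) := inferInstance
    exact Module.Finite.trans (R ⧸ I) B₀
  have hfl : Module.Flat (R ⧸ I) B₀ := Algebra.Smooth.flat _ _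
  have hpr₀ : Module.Projective (R ⧸ I) B₀ := by
    have : Module.FinitePresentation (R ⧸ I) B₀ := by
      have : Algebra.FinitePresentation (R ⧸ I) B₀ := inferInstance
      exact (Module.FinitePresentation.iff_finitePresentation_of_finite _ _).mpr this
    exact Module.Flat.projective_of_finitePresentation
  have hk3 : ∀ x, g x = 0 → ∃ y, x = π • y := fun x hx => by
    have : x ∈ RingHom.ker g := hx
    rw [hgk, Ideal.mem_span_singleton'] at this
    obtain ⟨a, ha⟩ := this
    exact ⟨a, by rw [← ha, Algebra.smul_def, mul_comm]⟩
  have hfinB : Module.Finite R B := by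
    refine finite_of_adic I g.toLinearMap hg fun x hx => ?_
    obtain ⟨y, rfl⟩ := hk3 x hx
    exact Submodule.smul_mem_smul (hI ▸ Ideal.mem_span_singleton_self π) trivial
  have hprB : Module.Projective R B := by
    refine projective_of_adic π I hI g.toLinearMap hg hk3 (fun x => ?_) htf
    have : π • x ∈ RingHom.ker g := by
      rw [hgk, Algebra.smul_def]
      exact Ideal.mul_mem_right _ _ (Ideal.mem_span_singleton_self _)
    exact this
  obtain ⟨e, -⟩ := reduction_equiv_aux I g hg (by rw [hgk, hmap])
  refine ⟨B, inferInstance, inferInstance, hfinB, ?_, ⟨e⟩⟩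
  exact etale_of_adic I (Algebra.Etale.of_equiv e.symm)

/-- **Proposition 2.5(2).** Let `R` be a commutative ring with a non-zero-divisor `π` such
that `R` is `π`-adically complete and separated, and write `R₀ = R/πR`.  Then base change
along `R → R₀` induces an equivalence from finite étale `R`-algebras to finite étale
`R₀`-algebras: (i) for finite étale `R`-algebras `B`, `C`, reduction is a bijection from
`R`-algebra homomorphisms `B → C` to `R₀`-algebra homomorphisms `B ⊗ R₀ → C ⊗ R₀`;
(ii) every finite étale `R₀`-algebra arises as the reduction of a finite étale `R`-algebra. -/
theorem finite_etale_equiv_of_adicComplete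
    (R : Type u) [CommRing R] (π : R) (hπ : π ∈ nonZeroDivisors R)
    (hR : IsAdicComplete (Ideal.span {π}) R) :
    (∀ (B C : Type u) [CommRing B] [CommRing C] [Algebra R B] [Algebra R C],
      Module.Finite R B → Algebra.Etale R B → Module.Finite R C → Algebra.Etale R C →
      Function.Bijective
        (fun f : B →ₐ[R] C =>
          (Algebra.TensorProduct.map
            (AlgHom.id (R ⧸ Ideal.span {π}) (R ⧸ Ideal.span {π})) f :
            ((R ⧸ Ideal.span {π}) ⊗[R] B) →ₐ[R ⧸ Ideal.span {π}]
              ((R ⧸ Ideal.span {π}) ⊗[R] C)))) ∧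
    (∀ (B₀ : Type u) [CommRing B₀] [Algebra (R ⧸ Ideal.span {π}) B₀],
      Module.Finite (R ⧸ Ideal.span {π}) B₀ → Algebra.Etale (R ⧸ Ideal.span {π}) B₀ →
      ∃ (B : Type u) (_ : CommRing B) (_ : Algebra R B),
        Module.Finite R B ∧ Algebra.Etale R B ∧
          Nonempty
            (((R ⧸ Ideal.span {π}) ⊗[R] B) ≃ₐ[R ⧸ Ideal.span {π}] B₀)) := by
  refine ⟨?_, ?_⟩
  · intro B C _ _ _ _ _ _ _ _
    exact reduction_bijective_aux (Ideal.span {π})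
  · intro B₀ _ _ _ _
    exact exists_lift_aux π hπ (Ideal.span {π}) rfl
end

section
/- Let R be a commutative ring and π ∈ R an element such that R is π-adically complete and separated. Then reduction modulo π induces a bijection on isomorphism classes of invertible modules (an isomorphism of Picard groups Pic(R) → Pic(R/πR)); concretely: (i) if M is an invertible R-module such that M/πM is a free R/πR-module, then M is a free R-module, and (ii) every invertible R/πR-module is isomorphic to M/πM for some invertible R-module M. (Lemma 2.6.) -/
open scoped TensorProduct

/-- An invertible module over a commutative ring: a finitely generated projective module of
constant rank `1` (rank `1` at every prime). -/
def IsInvertibleModule (R : Type u) [CommRing R]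
    (M : Type v) [AddCommGroup M] [Module R M] : Prop :=
  Module.Finite R M ∧ Module.Projective R M ∧
    ∀ (P : Ideal R) [P.IsPrime],
      Module.finrank (Localization.AtPrime P) (LocalizedModule P.primeCompl M) = 1

section PicAux

lemma pic_aux_surj {R : Type*} [CommRing R] (I : Ideal R) (hI : I ≤ Ideal.jacobson ⊥)
    {P : Type*} [AddCommGroup P] [Module R P] [Module.Finite R P] (h : P →ₗ[R] P)
    (hh : ∀ x : P, (1 : R ⧸ I) ⊗ₜ[R] h x = (1 : R ⧸ I) ⊗ₜ[R] x) :
    Function.Bijective h := by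
  have hs : Function.Surjective h := by
    rw [← LinearMap.range_eq_top, eq_top_iff]
    apply Submodule.le_of_le_smul_of_le_jacobson_bot (I := I) Module.Finite.fg_top hI
    intro x _
    have hx := congrArg (TensorProduct.quotTensorEquivQuotSMul P I) (hh x)
    rw [TensorProduct.quotTensorEquivQuotSMul_mk_one_tmul,
      TensorProduct.quotTensorEquivQuotSMul_mk_one_tmul, Submodule.Quotient.eq] at hx
    rw [show x = h x - (h x - x) by abel]
    exact Submodule.sub_mem _ (Submodule.mem_sup_left ⟨x, rfl⟩) (Submodule.mem_sup_right hx)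
  exact ⟨OrzechProperty.injective_of_surjective_endomorphism h hs, hs⟩

lemma pic_aux_mk_surj {R : Type*} [CommRing R] (I : Ideal R)
    (Q : Type*) [AddCommGroup Q] [Module R Q] :
    Function.Surjective (TensorProduct.mk R (R ⧸ I) Q 1) := by
  intro z
  induction z using TensorProduct.induction_on with
  | zero => exact ⟨0, by simp⟩
  | tmul a q =>
    obtain ⟨r, rfl⟩ := Ideal.Quotient.mk_surjective a
    refine ⟨r • q, ?_⟩
    rw [TensorProduct.mk_apply, ← TensorProduct.smul_tmul]
    congr 1
    rw [Algebra.smul_def, mul_one]; rfl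
  | add x y hx hy =>
    obtain ⟨a, rfl⟩ := hx
    obtain ⟨b, rfl⟩ := hy
    exact ⟨a + b, map_add _ _ _⟩

lemma pic_aux_lift {R : Type*} [CommRing R] (I : Ideal R)
    {P Q : Type*} [AddCommGroup P] [Module R P] [AddCommGroup Q] [Module R Q]
    [Module.Projective R P]
    (ψ : ((R ⧸ I) ⊗[R] P) →ₗ[R ⧸ I] ((R ⧸ I) ⊗[R] Q)) :
    ∃ f : P →ₗ[R] Q, ∀ x, (1 : R ⧸ I) ⊗ₜ[R] f x = ψ (1 ⊗ₜ x) := by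
  obtain ⟨f, hf⟩ := Module.projective_lifting_property (TensorProduct.mk R (R ⧸ I) Q 1)
    (ψ.restrictScalars R ∘ₗ TensorProduct.mk R (R ⧸ I) P 1) (pic_aux_mk_surj I Q)
  exact ⟨f, fun x => LinearMap.congr_fun hf x⟩

lemma pic_aux_equiv {R : Type*} [CommRing R] (I : Ideal R) (hI : I ≤ Ideal.jacobson ⊥)
    {P Q : Type*} [AddCommGroup P] [Module R P] [AddCommGroup Q] [Module R Q]
    [Module.Projective R P] [Module.Projective R Q] [Module.Finite R P] [Module.Finite R Q]
    (ψ : ((R ⧸ I) ⊗[R] P) ≃ₗ[R ⧸ I] ((R ⧸ I) ⊗[R] Q)) : Nonempty (P ≃ₗ[R] Q) := by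
  obtain ⟨f, hf⟩ := pic_aux_lift I ψ.toLinearMap
  obtain ⟨g, hg⟩ := pic_aux_lift I ψ.symm.toLinearMap
  have h1 := pic_aux_surj I hI (g ∘ₗ f) (fun x => by simp [hg, hf])
  have h2 := pic_aux_surj I hI (f ∘ₗ g) (fun x => by simp [hg, hf])
  refine ⟨LinearEquiv.ofBijective f ⟨?_, ?_⟩⟩
  · exact Function.Injective.of_comp (f := g) h1.1
  · exact Function.Surjective.of_comp (g := g) h2.2

lemma pic_aux_free {R : Type*} [CommRing R] (I : Ideal R) (hI : I ≤ Ideal.jacobson ⊥)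
    {M : Type*} [AddCommGroup M] [Module R M] [Module.Projective R M] [Module.Finite R M]
    (h : Module.Free (R ⧸ I) ((R ⧸ I) ⊗[R] M)) : Module.Free R M := by
  classical
  let ι := Module.Free.ChooseBasisIndex (R ⧸ I) ((R ⧸ I) ⊗[R] M)
  let b := Module.Free.chooseBasis (R ⧸ I) ((R ⧸ I) ⊗[R] M)
  obtain ⟨e⟩ := pic_aux_equiv (P := ι → R) (Q := M) I hI
    ((TensorProduct.piScalarRight R (R ⧸ I) (R ⧸ I) ι).trans b.equivFun.symm)
  exact Module.Free.of_equiv e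

/-- Newton iteration for idempotents. -/
noncomputable def picNewton {A : Type*} [Ring A] (a : A) : ℕ → A
  | 0 => a
  | k + 1 => 3 * picNewton a k ^ 2 - 2 * picNewton a k ^ 3

lemma pic_aux_idem {R : Type*} [CommRing R] (I : Ideal R) [IsAdicComplete I R] {n : ℕ}
    (a : Matrix (Fin n) (Fin n) R) (ha : ∀ i j, (a * a - a) i j ∈ I) :
    ∃ e : Matrix (Fin n) (Fin n) R, e * e = e ∧ ∀ i j, (e - a) i j ∈ I := by
  have mulmem : ∀ (K : Ideal R) (x y : Matrix (Fin n) (Fin n) R), (∀ i j, y i j ∈ K) →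
      ∀ i j, (x * y) i j ∈ K := by
    intro K x y hy i j
    rw [Matrix.mul_apply]
    exact Ideal.sum_mem _ fun k _ => K.mul_mem_left _ (hy k j)
  have mulmem' : ∀ (K L : Ideal R) (x y : Matrix (Fin n) (Fin n) R), (∀ i j, x i j ∈ K) →
      (∀ i j, y i j ∈ L) → ∀ i j, (x * y) i j ∈ K * L := by
    intro K L x y hx hy i j
    rw [Matrix.mul_apply]
    exact Ideal.sum_mem _ fun k _ => Ideal.mul_mem_mul (hx i k) (hy k j)
  let s := picNewton a
  have hd : ∀ k, ∀ i j, (s k * s k - s k) i j ∈ I ^ (k + 1) := by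
    intro k
    induction k with
    | zero => simpa [s, picNewton] using ha
    | succ k ih =>
      have : s (k+1) * s (k+1) - s (k+1) = (4 * s k ^ 2 - 4 * s k - 3) *
          ((s k * s k - s k) * (s k * s k - s k)) := by
        change (3 * s k ^ 2 - 2 * s k ^ 3) * (3 * s k ^ 2 - 2 * s k ^ 3)
          - (3 * s k ^ 2 - 2 * s k ^ 3) = _
        noncomm_ring
      rw [this]
      apply mulmem
      intro i j
      have := mulmem' _ _ _ _ ih ih i j
      rw [← pow_add] at this
      exact Ideal.pow_le_pow_right (by omega) this
  have hstep : ∀ k i j, (s (k+1) - s k) i j ∈ I ^ (k+1) := by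
    intro k
    have : s (k+1) - s k = (1 - 2 * s k) * (s k * s k - s k) := by
      change (3 * s k ^ 2 - 2 * s k ^ 3) - s k = _
      noncomm_ring
    rw [this]
    exact mulmem _ _ _ (hd k)
  have hcau : ∀ m k i j, (s (m + k) - s m) i j ∈ I ^ (m+1) := by
    intro m k i j
    induction k with
    | zero => simp
    | succ k ih =>
      have h1 := Ideal.pow_le_pow_right (show m + 1 ≤ m + k + 1 by omega) (hstep (m+k) i j)
      have := Ideal.add_mem _ h1 ih
      simpa [← add_assoc] using this
  have hlim : ∀ i j, ∃ L : R, ∀ k, s k i j - L ∈ I ^ k := by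
    intro i j
    obtain ⟨L, hL⟩ := IsPrecomplete.prec (I := I) (M := R) inferInstance (f := fun k => s k i j) (by
      intro m k hmk
      obtain ⟨k, rfl⟩ := Nat.exists_eq_add_of_le hmk
      rw [SModEq.sub_mem, smul_eq_mul, Ideal.mul_top, ← neg_sub]
      exact neg_mem (Ideal.pow_le_pow_right (by omega) (hcau m k i j)))
    refine ⟨L, fun k => ?_⟩
    have := hL k
    rwa [SModEq.sub_mem, smul_eq_mul, Ideal.mul_top] at this
  choose L hL using hlim
  let e : Matrix (Fin n) (Fin n) R := Matrix.of L
  have he : ∀ k i j, (s k - e) i j ∈ I ^ k := fun k i j => hL i j k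
  refine ⟨e, ?_, ?_⟩
  · ext i j
    rw [← sub_eq_zero]
    apply IsHausdorff.haus (I := I) inferInstance
    intro k
    rw [SModEq.zero, smul_eq_mul, Ideal.mul_top]
    have key : e * e - e = (s k * s k - s k) - (s k * (s k - e)) - ((s k - e) * e) + (s k - e) := by
      noncomm_ring
    have h1 := Ideal.pow_le_pow_right (Nat.le_succ k) (hd k i j)
    have h2 := mulmem _ (s k) _ (he k) i j
    have h3 := mulmem' _ ⊤ _ e (he k) (fun _ _ => trivial) i j
    rw [Ideal.mul_top] at h3
    have := Ideal.add_mem _ (Ideal.sub_mem _ (Ideal.sub_mem _ h1 h2) h3) (he k i j)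
    have k2 := congrFun (congrFun key i) j
    simp only [Matrix.sub_apply, Matrix.add_apply] at k2 this
    rw [k2]; exact this
  · intro i j
    have h1 := he 1 i j
    have h2 := hcau 0 1 i j
    simp only [pow_one, zero_add] at h1 h2
    have := Ideal.sub_mem _ h2 h1
    simpa [s, picNewton] using this

lemma pic_aux_matrix {R : Type*} [CommRing R] (I : Ideal R) {n : ℕ}
    (e : Matrix (Fin n) (Fin n) R) :
    (TensorProduct.piScalarRight R (R ⧸ I) (R ⧸ I) (Fin n)).toLinearMap ∘ₗ
      (Matrix.toLin' e).baseChange (R ⧸ I) =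
    Matrix.toLin' (e.map (Ideal.Quotient.mk I)) ∘ₗ
      (TensorProduct.piScalarRight R (R ⧸ I) (R ⧸ I) (Fin n)).toLinearMap := by
  apply TensorProduct.AlgebraTensorModule.ext
  intro x v
  simp only [LinearMap.comp_apply, LinearMap.baseChange_tmul, LinearEquiv.coe_coe,
    TensorProduct.piScalarRight_apply, TensorProduct.piScalarRightHom_tmul, Matrix.toLin'_apply]
  funext i
  simp only [Matrix.mulVec, dotProduct, Matrix.map_apply, Finset.sum_smul]
  refine Finset.sum_congr rfl fun j _ => ?_
  rw [mul_smul, Algebra.smul_def]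
  rfl

lemma pic_aux_exists {R : Type u} [CommRing R] (I : Ideal R) [IsAdicComplete I R]
    (M₀ : Type u) [AddCommGroup M₀] [Module (R ⧸ I) M₀] [Module.Finite (R ⧸ I) M₀]
    [Module.Projective (R ⧸ I) M₀] :
    ∃ (M : Type u) (_ : AddCommGroup M) (_ : Module R M), Module.Finite R M ∧
      Module.Projective R M ∧ Nonempty (((R ⧸ I) ⊗[R] M) ≃ₗ[R ⧸ I] M₀) := by
  classical
  obtain ⟨n, s₀, t₀, -, -, hst⟩ := Module.Finite.exists_comp_eq_id_of_projective (R ⧸ I) M₀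
  let e₀ : Matrix (Fin n) (Fin n) (R ⧸ I) := LinearMap.toMatrix' (t₀ ∘ₗ s₀)
  have he₀ : e₀ * e₀ = e₀ := by
    simp only [e₀]
    rw [← LinearMap.toMatrix'_comp]
    congr 1
    ext x : 1
    have := fun y => LinearMap.congr_fun hst y
    simp at this
    ext; simp [this]
  choose q hq using (Ideal.Quotient.mk_surjective (I := I))
  let a : Matrix (Fin n) (Fin n) R := e₀.map q
  have ha₀ : a.map (Ideal.Quotient.mk I) = e₀ := by ext; simp [a, hq]
  obtain ⟨e, hee, hea⟩ := pic_aux_idem I a (by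
    intro i j
    rw [← Ideal.Quotient.eq_zero_iff_mem]
    have : (a * a - a).map (Ideal.Quotient.mk I) = 0 := by
      rw [Matrix.map_sub _ (map_sub _), Matrix.map_mul, ha₀, he₀, sub_self]
    exact congrFun (congrFun this i) j)
  have he : e.map (Ideal.Quotient.mk I) = e₀ := by
    rw [← ha₀]
    ext i j
    exact Ideal.Quotient.eq.2 (hea i j)
  let E := Matrix.toLin' e
  have hE : ∀ x, E (E x) = E x := by
    intro x
    simp [E, hee]
  let f := (LinearMap.range E).subtype
  let p := E.rangeRestrict
  have hpf : p ∘ₗ f = .id := by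
    ext ⟨x, y, rfl⟩ : 2
    exact hE y
  have hfp : f ∘ₗ p = E := rfl
  refine ⟨LinearMap.range E, inferInstance, inferInstance, inferInstance,
    Module.Projective.of_split f p hpf, ?_⟩
  let α := TensorProduct.piScalarRight R (R ⧸ I) (R ⧸ I) (Fin n)
  have hα : α.toLinearMap ∘ₗ E.baseChange (R ⧸ I) = (t₀ ∘ₗ s₀) ∘ₗ α.toLinearMap := by
    have : t₀ ∘ₗ s₀ = Matrix.toLin' e₀ := by simp [e₀]
    rw [this, ← he]
    exact pic_aux_matrix I e
  have hα' : ∀ x, α (E.baseChange (R ⧸ I) x) = t₀ (s₀ (α x)) := fun x => LinearMap.congr_fun hα x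
  have hst' : ∀ x, s₀ (t₀ x) = x := fun x => LinearMap.congr_fun hst x
  have hfp' : ∀ x, f.baseChange (R ⧸ I) (p.baseChange (R ⧸ I) x) = E.baseChange (R ⧸ I) x := by
    intro x
    rw [← LinearMap.comp_apply, ← LinearMap.baseChange_comp, hfp]
  have hpf' : ∀ x, p.baseChange (R ⧸ I) (f.baseChange (R ⧸ I) x) = x := by
    intro x
    rw [← LinearMap.comp_apply, ← LinearMap.baseChange_comp, hpf, LinearMap.baseChange_id]; rfl
  refine ⟨LinearEquiv.ofLinearMap (s₀ ∘ₗ α.toLinearMap ∘ₗ f.baseChange (R ⧸ I))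
    (p.baseChange (R ⧸ I) ∘ₗ α.symm.toLinearMap ∘ₗ t₀) ?_ ?_⟩
  · refine LinearMap.ext fun x => ?_
    simp [hfp', hα', hst']
  · refine LinearMap.ext fun x => ?_
    simp only [LinearMap.comp_apply, LinearEquiv.coe_coe, ← hα', LinearEquiv.symm_apply_apply,
      LinearMap.id_apply]
    rw [← hfp', hpf', hpf']

lemma pic_aux_rank {R : Type*} [CommRing R] (I : Ideal R) (hI : I ≤ Ideal.jacobson ⊥)
    {M : Type*} [AddCommGroup M] [Module R M] [Module.Finite R M] [Module.Projective R M]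
    (h : ∀ p : PrimeSpectrum (R ⧸ I), Module.rankAtStalk ((R ⧸ I) ⊗[R] M) p = 1)
    (p : PrimeSpectrum R) : Module.rankAtStalk M p = 1 := by
  obtain ⟨m, hm, hpm⟩ := Ideal.exists_le_maximal p.asIdeal p.2.ne_top
  have hIm : I ≤ m := hI.trans (sInf_le ⟨bot_le, hm⟩)
  rw [Module.rankAtStalk_eq_of_le_of_finite_of_flat M (q := ⟨m, hm.isPrime⟩) hpm]
  obtain ⟨m', hm'⟩ : (⟨m, hm.isPrime⟩ : PrimeSpectrum R) ∈
      Set.range (PrimeSpectrum.comap (Ideal.Quotient.mk I)) := by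
    rw [range_comap_of_surjective _ _ Ideal.Quotient.mk_surjective]
    simpa [PrimeSpectrum.mem_zeroLocus] using hIm
  rw [← hm', ← h m', Module.rankAtStalk_baseChange]
  rfl

end PicAux

/-- **Lemma 2.6.** Let `R` be a commutative ring and `π ∈ R` an element such that `R` is
`π`-adically complete and separated.  Then reduction modulo `π` induces a bijection on
isomorphism classes of invertible modules `Pic(R) ≅ Pic(R/πR)`: (i) if `M` is an invertible
`R`-module with `M/πM` free over `R/πR`, then `M` is free over `R`; (ii) every invertible
`R/πR`-module is the reduction of an invertible `R`-module. -/
theorem picard_iso_of_adicComplete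
    (R : Type u) [CommRing R] (π : R)
    (hR : IsAdicComplete (Ideal.span {π}) R) :
    (∀ (M : Type u) [AddCommGroup M] [Module R M],
      IsInvertibleModule R M →
      Module.Free (R ⧸ Ideal.span {π}) ((R ⧸ Ideal.span {π}) ⊗[R] M) →
      Module.Free R M) ∧
    (∀ (M₀ : Type u) [AddCommGroup M₀] [Module (R ⧸ Ideal.span {π}) M₀],
      IsInvertibleModule (R ⧸ Ideal.span {π}) M₀ →
      ∃ (M : Type u) (_ : AddCommGroup M) (_ : Module R M),
        IsInvertibleModule R M ∧
          Nonempty (((R ⧸ Ideal.span {π}) ⊗[R] M) ≃ₗ[R ⧸ Ideal.span {π}] M₀)) := by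
  have hI := IsAdicComplete.le_jacobson_bot (Ideal.span {π})
  refine ⟨?_, ?_⟩
  · rintro M _ _ ⟨h1, h2, -⟩ hfree
    exact pic_aux_free _ hI hfree
  · rintro M₀ _ _ ⟨h1, h2, h3⟩
    obtain ⟨M, _, _, h4, h5, ⟨e⟩⟩ := pic_aux_exists (Ideal.span {π}) M₀
    refine ⟨M, inferInstance, inferInstance, ⟨h4, h5, fun P hP => ?_⟩, ⟨e⟩⟩
    refine pic_aux_rank (Ideal.span {π}) hI (fun p => ?_) ⟨P, hP⟩
    rw [Module.rankAtStalk_eq_of_equiv e]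
    exact h3 p.asIdeal
end

section
/- Let p be a prime, A a perfect commutative ring of characteristic p, and R' a finite étale W(A)-algebra. Then the (injective) image of R' in R'[1/p] is the integral closure of W(A) in R'[1/p]: an element x ∈ R'[1/p] is integral over W(A) if and only if x lies in the image of R'. (Lemma 2.7.) -/
open TensorProduct in
theorem aux_field_zero (W R' κ : Type*) [CommRing W] [CommRing R'] [Algebra W R']
    [Algebra.Etale W R'] [Field κ] [Algebra W κ] (p : ℕ) (hp : (p : κ) = 0)
    (y : R') (d : ℕ) (hy : (p : R') ∣ y ^ d) (f : R' →ₗ[W] W) : algebraMap W κ (f y) = 0 := by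
  have hred : IsReduced (κ ⊗[W] R') := Algebra.FormallyUnramified.isReduced_of_field κ _
  have h0 : (1 : κ) ⊗ₜ[W] y = 0 := by
    apply hred.eq_zero
    refine ⟨d, ?_⟩
    rw [Algebra.TensorProduct.tmul_pow, one_pow]
    obtain ⟨z, hz⟩ := hy
    rw [hz, ← nsmul_eq_mul, TensorProduct.tmul_smul, TensorProduct.smul_tmul', nsmul_eq_mul, hp]
    simp
  have h1 := congrArg (f.baseChange κ) h0
  rw [LinearMap.baseChange_tmul, map_zero] at h1
  have h2 := congrArg (TensorProduct.rid W κ) h1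
  simpa [Algebra.smul_def] using h2

theorem aux_dvd (p : ℕ) [Fact p.Prime]
    (A : Type*) [CommRing A] [CharP A p] [PerfectRing A p]
    (R' : Type*) [CommRing R'] [Algebra (WittVector p A) R']
    [Module.Projective (WittVector p A) R'] [Algebra.Etale (WittVector p A) R']
    (y : R') (d : ℕ) (hy : (p : R') ∣ y ^ d) : (p : R') ∣ y := by
  have key : ∀ f : R' →ₗ[WittVector p A] WittVector p A, (p : WittVector p A) ∣ f y := by
    intro f
    rw [← Ideal.mem_span_singleton, WittVector.mem_span_p_iff_coeff_zero_eq_zero]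
    have hA : IsReduced A := by
      refine (isReduced_iff_pow_one_lt p (Fact.out : p.Prime).one_lt).2 fun x hx => ?_
      apply (PerfectRing.bijective_frobenius (R := A) (p := p)).injective
      change x ^ p = 0 ^ p
      rw [hx, zero_pow (Fact.out : p.Prime).ne_zero]
    have hnil : (f y).coeff 0 ∈ nilradical A := by
      rw [nilradical_eq_sInf, Ideal.mem_sInf]
      intro q hq
      have : q.IsPrime := hq
      let _ : Algebra (WittVector p A) q.ResidueField :=
        ((algebraMap A q.ResidueField).comp WittVector.constantCoeff).toAlgebra
      have hp0 : (p : q.ResidueField) = 0 := by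
        rw [← map_natCast (algebraMap A q.ResidueField), CharP.cast_eq_zero, map_zero]
      have h := aux_field_zero (WittVector p A) R' q.ResidueField p hp0 y d hy f
      exact (Ideal.algebraMap_residueField_eq_zero).1 h
    exact (mem_nilradical.1 hnil).eq_zero
  obtain ⟨s, hs⟩ := (Module.projective_def' (R := WittVector p A) (P := R')).1 inferInstance
  have h := LinearMap.congr_fun hs y
  rw [LinearMap.id_apply, LinearMap.comp_apply, Finsupp.linearCombination_apply] at h
  rw [← h]
  refine Finset.dvd_sum fun i _ => ?_
  obtain ⟨c, hc⟩ := key (Finsupp.lapply i ∘ₗ s)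
  have hc : s y i = p * c := hc
  change (p : R') ∣ s y i • i
  rw [hc, Algebra.smul_def, map_mul, map_natCast, mul_assoc]
  exact dvd_mul_right _ _

/-- **Lemma 2.7.** Let `p` be a prime, `A` a perfect commutative ring of characteristic `p`,
and `R'` a finite étale `W(A)`-algebra.  Then `R'` is the integral closure of `W(A)` in
`R'[1/p]`: an element `x` of `R'[1/p]` is integral over `W(A)` if and only if it lies in the
image of `R'`. -/
theorem finite_etale_wittVector_integrally_closed
    (p : ℕ) [Fact p.Prime]
    (A : Type u) [CommRing A] [CharP A p] [PerfectRing A p]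
    (R' : Type u) [CommRing R'] [Algebra (WittVector p A) R']
    [Module.Finite (WittVector p A) R'] [Algebra.Etale (WittVector p A) R']
    -- `K` is the localization `R'[1/p]`:
    (K : Type u) [CommRing K] [Algebra R' K] [IsLocalization.Away (p : R') K]
    [Algebra (WittVector p A) K] [IsScalarTower (WittVector p A) R' K] :
    ∀ x : K, IsIntegral (WittVector p A) x ↔ x ∈ (algebraMap R' K).range := by
  have : Module.FinitePresentation (WittVector p A) R' :=
    Module.FinitePresentation.of_finite_of_finitePresentation _ _
  have : Module.Flat (WittVector p A) R' := inferInstance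
  have : Module.Projective (WittVector p A) R' := Module.Flat.projective_of_finitePresentation
  have hreg : ∀ a b : R', (p : R') * a = p * b → a = b := by
    have h0 : IsSMulRegular (WittVector p A) (p : WittVector p A) := by
      intro a b hab
      rw [← sub_eq_zero]
      apply WittVector.eq_zero_of_p_mul_eq_zero
      have hab : (p : WittVector p A) * a = p * b := hab
      rw [sub_mul, mul_comm a, mul_comm b, hab, sub_self]
    have h1 := IsSMulRegular.of_flat (S := R') h0
    rw [map_natCast] at h1
    intro a b hab
    exact h1 hab
  have hinj : Function.Injective (algebraMap R' K) := by
    apply IsLocalization.injective (M := Submonoid.powers (p : R'))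
    rw [Submonoid.powers_le, mem_nonZeroDivisors_iff]
    exact ⟨fun a h => hreg _ _ (by rw [h, mul_zero]),
      fun a h => hreg _ _ (by rw [mul_comm, h, mul_zero])⟩
  have hu : IsUnit (algebraMap R' K (p : R')) := IsLocalization.Away.algebraMap_isUnit (p : R')
  intro x
  constructor
  · intro hx
    obtain ⟨P, hP, hPx⟩ : IsIntegral R' x := hx.tower_top
    obtain ⟨n, y, hy⟩ := IsLocalization.Away.surj (p : R') x
    induction n generalizing y with
    | zero => exact ⟨y, by rw [← hy, pow_zero, mul_one]⟩
    | succ n ih =>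
      have h := Polynomial.scaleRoots_eval₂_eq_zero (algebraMap R' K) (s := (p : R') ^ (n + 1)) hPx
      rw [map_pow, mul_comm, hy, Polynomial.eval₂_at_apply, map_eq_zero_iff _ hinj,
        Polynomial.eval_eq_sum_range, Finset.sum_range_succ, Polynomial.natDegree_scaleRoots,
        Polynomial.coeff_scaleRoots_natDegree, hP.leadingCoeff, one_mul] at h
      have hd : (p : R') ∣ y ^ P.natDegree := by
        rw [← neg_eq_of_add_eq_zero_right h, dvd_neg]
        refine Finset.dvd_sum fun i hi => ?_
        rw [Polynomial.coeff_scaleRoots]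
        refine Dvd.dvd.mul_right (Dvd.dvd.mul_left ?_ _) _
        rw [← pow_mul]
        refine dvd_pow_self _ (Nat.mul_ne_zero (Nat.succ_ne_zero _) ?_)
        have := Finset.mem_range.1 hi
        omega
      obtain ⟨z, hz⟩ := aux_dvd p A R' y _ hd
      refine ih z (hu.mul_left_cancel ?_)
      rw [← map_mul, ← hz, ← hy, pow_succ]
      ring
  · rintro ⟨r, rfl⟩
    exact (Algebra.IsIntegral.isIntegral (R := WittVector p A) r).algebraMap
end

section
/- Let p be a prime, A a perfect commutative ring of characteristic p, and R' a W(A)-algebra that is finitely generated and projective as a W(A)-module, such that R'[1/p] is a finite étale W(A)[1/p]-algebra. Let R'' be the integral closure of R' in R'[1/p]. Then R'' is p-adically complete and separated: the natural map R'' → lim_n R''/p^{n+1}R'' is an isomorphism. (Lemma 2.9(2).) -/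
open Polynomial in
theorem aux_sub_dvd {R B : Type*} [CommRing R] [Ring B] [Algebra R B] (a b : B) (h : Commute a b)
    (f : R[X]) : (a - b) ∣ aeval a f - aeval b f := by
  induction f using Polynomial.induction_on' with
  | add f g hf hg =>
    rw [map_add, map_add, add_sub_add_comm]
    exact dvd_add hf hg
  | monomial n r =>
    rw [aeval_monomial, aeval_monomial, ← mul_sub, ← h.mul_geom_sum₂]
    exact ⟨algebraMap R B r * ∑ i ∈ Finset.range n, a ^ i * b ^ (n - 1 - i), by
      rw [← mul_assoc, Algebra.commutes, mul_assoc]⟩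

open Polynomial in
theorem aux_charpoly {R S n : Type*} [CommRing R] [CommRing S] [Algebra R S] [Fintype n]
    [DecidableEq n] (M : Matrix n n S) (hM : IsIntegral R M) : IsIntegral R M.trace := by
  obtain ⟨f, hf, hfM⟩ := hM
  have hd : M.charpoly ∣ (f ^ Fintype.card n).map (algebraMap R S) := by
    have h1 := aux_sub_dvd (R := R) (algebraMap S[X] (Matrix n n S[X]) X)
      ((Polynomial.CAlgHom (R := R) (A := S)).mapMatrix M)
      (Algebra.commutes _ _) f
    obtain ⟨G, hG⟩ := h1
    have h2 : aeval ((Polynomial.CAlgHom (R := R) (A := S)).mapMatrix M) f = 0 := by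
      rw [aeval_algHom_apply, aeval_def, hfM, map_zero]
    rw [h2, sub_zero, aeval_algebraMap_apply] at hG
    have h3 : aeval (X : S[X]) f = f.map (algebraMap R S) := by
      rw [aeval_X_left_eq_map]
    rw [h3] at hG
    have := congrArg Matrix.det hG
    rw [Matrix.det_mul, Matrix.algebraMap_eq_diagonal, Matrix.algebraMap_eq_diagonal] at this
    refine ⟨G.det, ?_⟩
    rw [Polynomial.map_pow]
    have hC : M.map (CAlgHom (R := R) (A := S)) = M.map C := rfl
    simpa [Matrix.charpoly, Matrix.charmatrix, Pi.algebraMap_def, hC] using this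
  rcases isEmpty_or_nonempty n with hn | hn
  · simp [Matrix.trace, isIntegral_zero]
  · rw [Matrix.trace_eq_neg_charpoly_coeff]
    exact (Polynomial.isIntegral_coeff_of_dvd _ _ (hf.pow _) M.charpoly_monic hd _).neg

theorem aux_adic_iff (B : Type*) [CommRing B] (p : B) :
    IsAdicComplete (Ideal.span {p}) B ↔
      (∀ x : B, (∀ n, p ^ n ∣ x) → x = 0) ∧
      (∀ f : ℕ → B, (∀ m n, m ≤ n → p ^ m ∣ f n - f m) → ∃ L, ∀ n, p ^ n ∣ L - f n) := by
  have key : ∀ (n : ℕ) (x y : B),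
      x ≡ y [SMOD (Ideal.span {p} ^ n • ⊤ : Submodule B B)] ↔ p ^ n ∣ y - x := by
    intro n x y
    rw [SModEq.comm, SModEq.sub_mem, Ideal.span_singleton_pow, smul_eq_mul, Ideal.mul_top,
      Ideal.mem_span_singleton]
  constructor
  · intro h
    refine ⟨fun x hx => h.haus' x fun n => ?_, fun f hf => ?_⟩
    · rw [key]; simpa using hx n
    · obtain ⟨L, hL⟩ := h.prec' f (fun {m n} hmn => (key _ _ _).2 (hf m n hmn))
      exact ⟨L, fun n => (key _ _ _).1 (hL n)⟩
  · rintro ⟨h1, h2⟩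
    exact { haus' := fun x hx => h1 x fun n => by simpa using (key _ _ _).1 (hx n)
            prec' := fun f hf => by
              obtain ⟨L, hL⟩ := h2 f (fun m n hmn => (key _ _ _).1 (hf hmn))
              exact ⟨L, fun n => (key _ _ _).2 (hL n)⟩ }

/-- finite projective algebras over adically complete rings are complete -/
theorem aux_projective (W B : Type*) [CommRing W] [CommRing B] [Algebra W B] [Module.Finite W B]
    [Module.Projective W B] (p : W) (h : IsAdicComplete (Ideal.span {p}) W) :
    IsAdicComplete (Ideal.span {algebraMap W B p}) B := by
  rw [aux_adic_iff] at h ⊢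
  obtain ⟨d, q, s, -, -, hqs⟩ := Module.Finite.exists_comp_eq_id_of_projective W B
  have hqs' : ∀ x, q (s x) = x := fun x => LinearMap.congr_fun hqs x
  have hs : ∀ n x, algebraMap W B p ^ n ∣ x → ∀ i, p ^ n ∣ s x i := by
    rintro n x ⟨y, rfl⟩ i
    rw [← map_pow, ← Algebra.smul_def, map_smul]
    exact ⟨_, rfl⟩
  refine ⟨fun x hx => ?_, fun f hf => ?_⟩
  · rw [← hqs' x]
    have : s x = 0 := by
      ext i
      exact h.1 _ fun n => hs n x (hx n) i
    rw [this, map_zero]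
  · have := fun i => h.2 (fun n => s (f n) i) (fun m n hmn => by
      simpa using hs m _ (hf m n hmn) i)
    choose L hL using this
    choose c hc using hL
    refine ⟨q L, fun n => ⟨q fun i => c i n, ?_⟩⟩
    rw [← map_pow, ← Algebra.smul_def, ← map_smul]
    nth_rw 1 [← hqs' (f n)]
    rw [← map_sub]
    congr 1
    ext i
    exact hc i n

theorem aux_projective_nzd (W B : Type*) [CommRing W] [CommRing B] [Algebra W B] [Module.Finite W B]
    [Module.Projective W B] (p : W) (h : ∀ x, p * x = 0 → x = 0) (x : B)
    (hx : algebraMap W B p * x = 0) : x = 0 := by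
  obtain ⟨d, q, s, -, -, hqs⟩ := Module.Finite.exists_comp_eq_id_of_projective W B
  have hqs' : ∀ x, q (s x) = x := fun x => LinearMap.congr_fun hqs x
  have : s x = 0 := by
    ext i
    apply h
    rw [← Algebra.smul_def] at hx
    have := congrArg s hx
    rw [map_smul, map_zero] at this
    exact congrFun this i
  rw [← hqs' x, this, map_zero]

theorem aux_projK (F K : Type*) [CommRing F] [CommRing K] [Algebra F K] [Module.Finite F K]
    [Algebra.Etale F K] : Module.Projective F K := by
  have := Module.FinitePresentation.of_finite_of_finitePresentation F K
  exact Module.Flat.projective_of_finitePresentation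

open Polynomial in
theorem aux_trace (W F K : Type*) [CommRing W] [CommRing F] [CommRing K] [Algebra W F]
    [Algebra F K] [Algebra W K] [IsScalarTower W F K] [Module.Finite F K] [Module.Projective F K]
    [Algebra.FormallyUnramified F K] :
    ∃ T : K →ₗ[F] F, (∀ x, IsIntegral W x → IsIntegral W (T x)) ∧
      ∃ l : Finset (K × K), ∀ x, x = ∑ j ∈ l, T (x * j.1) • j.2 := by
  classical
  obtain ⟨d, q, s, -, -, hqs⟩ := Module.Finite.exists_comp_eq_id_of_projective F K
  have hqs' : ∀ x, q (s x) = x := fun x => LinearMap.congr_fun hqs x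
  have hsum : ∀ x, ∑ i, s x i • q (Pi.single i 1) = x := by
    intro x
    conv_rhs => rw [← hqs' x, ← Finset.univ_sum_single (s x), map_sum]
    refine Finset.sum_congr rfl fun i _ => ?_
    rw [← map_smul, ← Pi.single_smul, smul_eq_mul, mul_one]
  let M : K →ₗ[F] Matrix (Fin d) (Fin d) F :=
    { toFun := fun x => Matrix.of fun i k => s (x * q (Pi.single k 1)) i
      map_add' := fun x y => by ext; simp [add_mul]
      map_smul' := fun c x => by ext; simp }
  have hM : ∀ x y, M x * M y = M (x * y) := by
    intro x y
    ext i l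
    have := congrArg (fun z => s (x * z) i) (hsum (y * q (Pi.single l 1)))
    simp only [Finset.mul_sum, map_sum, mul_smul_comm, map_smul, Finset.sum_apply,
      Pi.smul_apply, smul_eq_mul] at this
    simp only [Matrix.mul_apply, M, LinearMap.coe_mk, AddHom.coe_mk, Matrix.of_apply, mul_assoc]
    rw [← this]
    exact Finset.sum_congr rfl fun k _ => mul_comm _ _
  have hpow : ∀ x n, M x ^ (n + 1) = M (x ^ (n + 1)) := by
    intro x n
    induction n with
    | zero => simp
    | succ n ih => rw [pow_succ, ih, hM, ← pow_succ]
  refine ⟨(Matrix.traceLinearMap (Fin d) F F).comp M, fun x ⟨f, hf, hfx⟩ => ?_, ?_⟩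
  · apply aux_charpoly (M x)
    refine ⟨f * X, hf.mul monic_X, ?_⟩
    have : ∀ g : W[X], aeval (M x) (g * X) = M (aeval x (g * X)) := by
      intro g
      induction g using Polynomial.induction_on' with
      | add f g hf hg => rw [add_mul, map_add, map_add, map_add, hf, hg]
      | monomial n r =>
        rw [monomial_mul_X, aeval_monomial, aeval_monomial, hpow, ← Algebra.smul_def,
          ← Algebra.smul_def, ← algebraMap_smul F r, ← algebraMap_smul F r, map_smul]
    rw [← aeval_def, this, map_mul, aeval_def, hfx, zero_mul, map_zero]
  · obtain ⟨t, ht1, ht2⟩ := (Algebra.FormallyUnramified.iff_exists_tensorProduct (R := F)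
      (S := K)).1 inferInstance
    obtain ⟨l, hl⟩ := TensorProduct.exists_finset t
    refine ⟨l, fun x => ?_⟩
    let Φ : Fin d → TensorProduct F K K →ₗ[F] K := fun i =>
      TensorProduct.lift ((LinearMap.lsmul F K).comp ((LinearMap.proj i).comp s))
    have hΦ : ∀ i u v, Φ i (u ⊗ₜ v) = s u i • v := fun i u v => rfl
    have hΦ2 : ∀ i z (w : TensorProduct F K K), Φ i ((1 ⊗ₜ z) * w) = z * Φ i w := by
      intro i z w
      induction w using TensorProduct.induction_on with
      | zero => simp
      | tmul u v => rw [Algebra.TensorProduct.tmul_mul_tmul, one_mul, hΦ, hΦ, mul_smul_comm]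
      | add u v hu hv => rw [mul_add, map_add, hu, hv, map_add, mul_add]
    have ht : ∀ z, (1 ⊗ₜ z) * t = (z ⊗ₜ 1) * t := fun z => by
      rw [← sub_eq_zero, ← sub_mul]; exact ht1 z
    have hM : ∀ z, (Matrix.traceLinearMap (Fin d) F F).comp M z
        = ∑ i, s (z * q (Pi.single i 1)) i := fun z => rfl
    have e1 : ∑ j ∈ l, (Matrix.traceLinearMap (Fin d) F F).comp M (x * j.1) • j.2
        = ∑ i, Φ i (((x * q (Pi.single i 1)) ⊗ₜ 1) * t) := by
      simp only [hM, Finset.sum_smul]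
      rw [Finset.sum_comm]
      refine Finset.sum_congr rfl fun i _ => ?_
      rw [hl, Finset.mul_sum, map_sum]
      refine Finset.sum_congr rfl fun j _ => ?_
      rw [Algebra.TensorProduct.tmul_mul_tmul, one_mul, hΦ, mul_right_comm]
    have e2 : ∀ w : TensorProduct F K K,
        ∑ i, q (Pi.single i 1) * Φ i w = Algebra.TensorProduct.lmul' F w := by
      intro w
      induction w using TensorProduct.induction_on with
      | zero => simp
      | tmul u v =>
        rw [Algebra.TensorProduct.lmul'_apply_tmul]
        conv_rhs => rw [← hsum u, Finset.sum_mul]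
        exact Finset.sum_congr rfl fun i _ => by rw [hΦ, mul_smul_comm, smul_mul_assoc]
      | add u v hu hv => simp only [map_add, mul_add, Finset.sum_add_distrib, hu, hv]
    rw [e1]
    simp only [← ht, hΦ2, mul_assoc]
    rw [← Finset.mul_sum, e2, ht2, mul_one]

/-- `W(A)` is integrally closed in `W(A)[1/p]`. -/
theorem aux_closed {W F : Type*} [CommRing W] [CommRing F] [Algebra W F] (p : W)
    [IsLocalization.Away p F] (hp : ∀ x, p * x = 0 → x = 0)
    (hr : ∀ x n, p ∣ x ^ n → p ∣ x) (y : F) (hy : IsIntegral W y) :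
    ∃ w, algebraMap W F w = y := by
  have hinj : Function.Injective (algebraMap W F) := by
    apply IsLocalization.injective F (M := Submonoid.powers p)
    apply Submonoid.powers_le.2
    exact mem_nonZeroDivisors_iff_right.2 fun x hx => hp x (by rw [mul_comm]; exact hx)
  obtain ⟨n, w, hw⟩ : ∃ n w, algebraMap W F p ^ n * y = algebraMap W F w := by
    obtain ⟨n, w, hw⟩ := IsLocalization.Away.surj p y
    exact ⟨n, w, by rw [mul_comm]; exact hw⟩
  have hu : IsUnit (algebraMap W F p) := IsLocalization.Away.algebraMap_isUnit p
  induction n generalizing w with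
  | zero => exact ⟨w, by rw [← hw, pow_zero, one_mul]⟩
  | succ n ih =>
    obtain ⟨f, hf, hfy⟩ := hy
    obtain ⟨v, rfl⟩ : p ∣ w := by
      have h := Polynomial.dvd_pow_natDegree_of_eval₂_eq_zero hinj hf (p ^ (n + 1)) w y hfy
        (by rw [← hw, map_pow])
      exact hr w _ ((dvd_pow_self p (Nat.succ_ne_zero n)).trans h)
    refine ih v ?_
    rw [map_mul, pow_succ', mul_assoc] at hw
    exact hu.mul_left_cancel hw

/-- **Lemma 2.9(2).** Let `p` be a prime, `A` a perfect commutative ring of characteristic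
`p`, and `R'` a `W(A)`-algebra that is finitely generated and projective as a `W(A)`-module
such that `R'[1/p]` is finite étale over `W(A)[1/p]`.  Let `R''` be the integral closure of
`R'` in `R'[1/p]`.  Then `R''` is `p`-adically complete and separated: the natural map
`R'' → lim_n R''/p^(n+1)R''` is an isomorphism. -/
theorem integralClosure_isAdicComplete_wittVector
    (p : ℕ) [Fact p.Prime]
    (A : Type u) [CommRing A] [CharP A p] [PerfectRing A p]
    (R' : Type u) [CommRing R'] [Algebra (WittVector p A) R']
    [Module.Finite (WittVector p A) R'] [Module.Projective (WittVector p A) R']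
    -- `K₀` is the localization `W(A)[1/p]`:
    (K₀ : Type u) [CommRing K₀] [Algebra (WittVector p A) K₀]
    [IsLocalization.Away (p : WittVector p A) K₀]
    -- `K` is the localization `R'[1/p]`:
    (K : Type u) [CommRing K] [Algebra R' K] [IsLocalization.Away (p : R') K]
    [Algebra (WittVector p A) K] [Algebra K₀ K]
    [IsScalarTower (WittVector p A) R' K] [IsScalarTower (WittVector p A) K₀ K]
    -- `R'[1/p]` is finite étale over `W(A)[1/p]`:
    [Module.Finite K₀ K] [Algebra.Etale K₀ K] :
    IsAdicComplete (Ideal.span {(p : integralClosure R' K)})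
      (integralClosure R' K) := by
  classical
  have hpW : ∀ x : WittVector p A, (p : WittVector p A) * x = 0 → x = 0 := fun x hx =>
    WittVector.eq_zero_of_p_mul_eq_zero x (by rw [mul_comm]; exact hx)
  have hredA : ∀ (a : A) (n : ℕ), a ^ n = 0 → a = 0 := by
    intro a n h
    have h1 : a ^ p ^ n = 0 := pow_eq_zero_of_le (Nat.lt_pow_self (Fact.out : p.Prime).one_lt).le h
    apply (iterateFrobeniusEquiv A p n).injective
    rw [map_zero, iterateFrobeniusEquiv_apply, iterateFrobenius_def, h1]
  have hrW : ∀ (x : WittVector p A) n, (p : WittVector p A) ∣ x ^ n → (p : WittVector p A) ∣ x := by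
    intro x n h
    rw [← Ideal.mem_span_singleton, WittVector.mem_span_p_iff_coeff_zero_eq_zero] at h ⊢
    have h' : WittVector.constantCoeff x ^ n = 0 := by rw [← map_pow]; exact h
    exact hredA _ n h'
  have hR : IsAdicComplete (Ideal.span {(p : R')}) R' := by
    have := aux_projective (WittVector p A) R' (p : WittVector p A) inferInstance
    rwa [map_natCast] at this
  rw [aux_adic_iff] at hR ⊢
  have hpR : ∀ x : R', (p : R') * x = 0 → x = 0 := fun x hx =>
    aux_projective_nzd (WittVector p A) R' (p : WittVector p A) hpW x
      (by rw [map_natCast]; exact hx)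
  have hinj : Function.Injective (algebraMap R' K) := by
    apply IsLocalization.injective K (M := Submonoid.powers (p : R'))
    apply Submonoid.powers_le.2
    exact mem_nonZeroDivisors_iff_right.2 fun x hx => hpR x (by rw [mul_comm]; exact hx)
  have hu : IsUnit (p : K) := by
    have := IsLocalization.Away.algebraMap_isUnit (S := K) (p : R')
    rwa [map_natCast] at this
  have hsurj : ∀ z : K, ∃ N, ∀ n ≥ N, ∃ r, (p : K) ^ n * z = algebraMap R' K r := by
    intro z
    obtain ⟨N, r, hr⟩ := IsLocalization.Away.surj (p : R') z
    refine ⟨N, fun n hn => ⟨(p : R') ^ (n - N) * r, ?_⟩⟩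
    rw [map_mul, ← hr, map_pow, map_natCast, mul_left_comm, ← pow_add, Nat.sub_add_cancel hn,
      mul_comm]
  have := aux_projK K₀ K
  obtain ⟨T, hT, l, hl⟩ := aux_trace (WittVector p A) K₀ K
  have hint : ∀ x : K, IsIntegral R' x → IsIntegral (WittVector p A) x := fun x hx =>
    isIntegral_trans x hx
  -- bounded denominators
  obtain ⟨N, hN⟩ : ∃ N : ℕ, ∀ x : K, IsIntegral R' x → ∃ r, (p : K) ^ N * x = algebraMap R' K r := by
    choose e he using hsurj
    let m := l.sup (fun j => max (e j.1) (e j.2))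
    refine ⟨m + m, fun x hx => ?_⟩
    have hterm : ∀ j ∈ l, ∃ r, (p : K) ^ (m + m) * (T (x * j.1) • j.2) = algebraMap R' K r := by
      intro j hj
      have hm : max (e j.1) (e j.2) ≤ m := Finset.le_sup (f := fun j => max (e j.1) (e j.2)) hj
      obtain ⟨a, ha⟩ := he j.1 m ((le_max_left _ _).trans hm)
      obtain ⟨b, hb⟩ := he j.2 m ((le_max_right _ _).trans hm)
      obtain ⟨w, hw⟩ := aux_closed (p : WittVector p A) hpW hrW (T (x * ((p : K) ^ m * j.1)))
        (hT _ (hint _ (hx.mul (by rw [ha]; exact isIntegral_algebraMap))))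
      refine ⟨algebraMap (WittVector p A) R' w * b, ?_⟩
      have e1 : T (x * ((p : K) ^ m * j.1)) = (p : K₀) ^ m * T (x * j.1) := by
        rw [← smul_eq_mul (a := (p : K₀) ^ m), ← map_smul, Algebra.smul_def, map_pow, map_natCast,
          mul_left_comm]
      rw [map_mul (algebraMap R' K), ← hb, ← IsScalarTower.algebraMap_apply,
        IsScalarTower.algebraMap_apply (WittVector p A) K₀ K, hw, e1, map_mul (algebraMap K₀ K), map_pow,
        map_natCast, Algebra.smul_def]
      ring
    choose! r hr using hterm
    refine ⟨∑ j ∈ l, r j, ?_⟩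
    conv_lhs => rw [hl x, Finset.mul_sum]
    rw [map_sum]
    exact Finset.sum_congr rfl hr
  choose! ρ hρ using hN
  have hdvd : ∀ (n : ℕ) (x : integralClosure R' K),
      (p : integralClosure R' K) ^ n ∣ x ↔ ∃ y : K, IsIntegral R' y ∧ (x : K) = (p : K) ^ n * y := by
    intro n x
    constructor
    · rintro ⟨y, rfl⟩
      exact ⟨y, y.2, by push_cast; rfl⟩
    · rintro ⟨y, hy, h⟩
      exact ⟨⟨y, hy⟩, Subtype.ext (by push_cast; exact h)⟩
  have hdR : ∀ (n : ℕ) (r : R') (y : K), IsIntegral R' y →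
      algebraMap R' K r = (p : K) ^ N * ((p : K) ^ n * y) → (p : R') ^ n ∣ r := by
    intro n r y hy h
    refine ⟨ρ y, hinj ?_⟩
    rw [h, map_mul, ← hρ y hy, map_pow, map_natCast, mul_left_comm]
  refine ⟨fun x hx => ?_, fun f hf => ?_⟩
  · have h0 : ρ x = 0 := by
      refine hR.1 _ fun n => ?_
      obtain ⟨y, hy, h⟩ := (hdvd n x).1 (hx n)
      exact hdR n _ y hy (by rw [← hρ x x.2, h])
    have h1 := hρ x x.2
    rw [h0, map_zero] at h1
    exact Subtype.ext ((hu.pow N).mul_right_eq_zero.1 h1)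
  · obtain ⟨g, hg⟩ := hR.2 (fun n => ρ (f n)) (fun m n hmn => by
      obtain ⟨y, hy, h⟩ := (hdvd m _).1 (hf m n hmn)
      refine hdR m _ y hy ?_
      rw [map_sub, ← hρ _ (f n).2, ← hρ _ (f m).2, ← mul_sub, ← h]
      rfl)
    obtain ⟨z, hz⟩ : ∃ z : K, (p : K) ^ N * z = algebraMap R' K g := by
      obtain ⟨v, hv⟩ := hu.pow N
      exact ⟨v⁻¹ * algebraMap R' K g, by rw [← hv, Units.mul_inv_cancel_left]⟩
    have key : ∀ n, ∃ r : R', z - f (n + N) = (p : K) ^ n * algebraMap R' K r := by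
      intro n
      obtain ⟨r, hr⟩ := hg (n + N)
      refine ⟨r, (hu.pow N).mul_left_cancel ?_⟩
      rw [mul_sub, hz, hρ _ (f (n + N)).2, ← map_sub, hr, map_mul, map_pow, map_natCast, pow_add]
      ring
    have hzint : IsIntegral R' z := by
      obtain ⟨r, hr⟩ := key 0
      rw [sub_eq_iff_eq_add] at hr
      rw [hr, pow_zero, one_mul]
      exact isIntegral_algebraMap.add (f (0 + N)).2
    refine ⟨⟨z, hzint⟩, fun n => ?_⟩
    have : (⟨z, hzint⟩ : integralClosure R' K) - f n
        = (⟨z, hzint⟩ - f (n + N)) + (f (n + N) - f n) := by ring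
    rw [this]
    refine dvd_add ?_ (hf n (n + N) (Nat.le_add_right _ _))
    obtain ⟨r, hr⟩ := key n
    exact (hdvd _ _).2 ⟨_, isIntegral_algebraMap, hr⟩
end

section
/- Let k be a perfect field of characteristic 2 and let n be an odd positive integer. Let f ∈ k[X_1,…,X_n] be a polynomial, let J(f) be the ideal generated by the partial derivatives ∂f/∂X_1, …, ∂f/∂X_n, and let m be a maximal ideal of k[X_1,…,X_n] containing J(f) such that the localization of k[X_1,…,X_n]/J(f) at m is a nonzero finite-dimensional k-vector space (so that the corresponding closed point is an isolated singular point of f : 𝔸ⁿ_k → 𝔸¹_k). Then the k-dimension of this localization — the Milnor number μ(f, x) — is even. (Proposition 3.21: in characteristic 2, the Milnor number of an isolated singular point of a function on a smooth variety of odd dimension is even.) -/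
open RingTheory.Sequence IsLocalRing CategoryTheory Abelian Pointwise

/-- depth drops by one modulo a regular element -/
lemma mn_depth_drop {R : Type u} [CommRing R] [IsNoetherianRing R] [IsLocalRing R]
    (M : Type u) [AddCommGroup M] [Module R M] [Module.Finite R M] (d : ℕ)
    (h : ∃ rs : List R, rs.length = d + 1 ∧ (∀ r ∈ rs, r ∈ maximalIdeal R) ∧ IsRegular M rs)
    (z : R) (hzm : z ∈ maximalIdeal R) (hz : IsSMulRegular M z) :
    ∃ rs : List R, rs.length = d ∧ (∀ r ∈ rs, r ∈ maximalIdeal R) ∧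
      IsRegular (QuotSMulTop z M) rs := by
  have hnt : Nontrivial M := by
    obtain ⟨rs, _, _, h3⟩ := h
    exact h3.nontrivial
  have key : ∀ (L : Type u) [AddCommGroup L] [Module R L] [Module.Finite R L] [Nontrivial L],
      maximalIdeal R • (⊤ : Submodule R L) < ⊤ := by
    intro L _ _ _ _
    rw [lt_top_iff_ne_top]
    exact (Submodule.top_ne_ideal_smul_of_le_jacobson_annihilator
      (IsLocalRing.maximalIdeal_le_jacobson _)).symm
  have hnt2 : Nontrivial (QuotSMulTop z M) := nontrivial_quotSMulTop_of_mem_maximalIdeal M hzm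
  have h_ext := ((ModuleCat.exists_isRegular_tfae (maximalIdeal R) (d+1) (ModuleCat.of R M)
    (key M)).out 3 1).1 h
  refine ((ModuleCat.exists_isRegular_tfae (maximalIdeal R) d (ModuleCat.of R (QuotSMulTop z M))
    (key _)).out 1 3).1 ?_
  intro i hi
  have hz' : IsSMulRegular (ModuleCat.of R M) z := hz
  have zero1 := AddCommGrpCat.isZero_of_iff_subsingleton.mpr (h_ext i (by omega))
  have zero2 := AddCommGrpCat.isZero_of_iff_subsingleton.mpr (h_ext (i + 1) (by omega))
  exact AddCommGrpCat.subsingleton_of_isZero <| ShortComplex.Exact.isZero_of_both_zeros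
    ((Ext.covariant_sequence_exact₃' _ hz'.smulShortComplex_shortExact) i (i + 1) rfl)
    (zero1.eq_zero_of_src _) (zero2.eq_zero_of_tgt _)

lemma mn_le_dim_of_ass {R : Type u} [CommRing R] [IsNoetherianRing R] [IsLocalRing R]
    (rs : List R) : ∀ (M : Type u) [AddCommGroup M] [Module R M] [Module.Finite R M]
    (_ : ∀ r ∈ rs, r ∈ maximalIdeal R) (_ : IsRegular M rs) (p : Ideal R)
    (_ : p ∈ associatedPrimes R M), (rs.length : WithBot ℕ∞) ≤ ringKrullDim (R ⧸ p) := by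
  induction rs with
  | nil =>
    intro M _ _ _ _ _ p hp
    have := hp.isPrime
    simpa using ringKrullDim_nonneg_of_nontrivial
  | cons x rs ih =>
    intro M _ _ _ hm hreg p hp
    have hpp := hp.isPrime
    rw [isRegular_cons_iff] at hreg
    obtain ⟨hx, hrs⟩ := hreg
    have hxm : x ∈ maximalIdeal R := hm x (by simp)
    obtain ⟨_, m0, hm0⟩ := isAssociatedPrime_iff.1 hp
    have hpm : ∀ a : R, a ∈ p ↔ a • m0 = 0 := by
      intro a
      rw [hm0, Submodule.mem_colon_singleton, Submodule.mem_bot]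
    have hm00 : m0 ≠ 0 := by
      intro h0
      apply hpp.ne_top
      rw [Ideal.eq_top_iff_one, hpm, h0, smul_zero]
    let N : Submodule R M := Submodule.torsionBySet R M p
    have hN : N ≠ ⊥ := by
      intro h0
      apply hm00
      rw [← Submodule.mem_bot R, ← h0, Submodule.mem_torsionBySet_iff]
      intro a
      exact (hpm a).1 a.2
    let N' : Submodule R (QuotSMulTop x M) := N.map (Submodule.mkQ _)
    have hN' : N' ≠ ⊥ := by
      intro h0
      apply hN
      have hle : N ≤ x • (⊤ : Submodule R M) := by
        have h1 := (Submodule.map_le_iff_le_comap.1 h0.le)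
        rwa [Submodule.comap_bot, Submodule.ker_mkQ] at h1
      apply Submodule.eq_bot_of_le_smul_of_le_jacobson_bot (maximalIdeal R) N
        (IsNoetherian.noetherian N) _ (IsLocalRing.maximalIdeal_le_jacobson _)
      intro y hy
      obtain ⟨w, -, rfl⟩ := hle hy
      refine Submodule.smul_mem_smul hxm ?_
      rw [Submodule.mem_torsionBySet_iff] at hy ⊢
      intro a
      apply hx
      have := hy a
      simpa [smul_comm x] using this
    obtain ⟨w', hw', hw0⟩ := (Submodule.ne_bot_iff _).1 hN'
    obtain ⟨q, hq', hann⟩ := exists_le_isAssociatedPrime_of_isNoetherianRing R w' hw0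
    obtain ⟨w, hw, rfl⟩ := hw'
    have hpq : p ≤ q := by
      refine le_trans ?_ hann
      intro a ha
      rw [Submodule.mem_colon_singleton, Submodule.mem_bot]
      rw [← map_smul, (Submodule.mem_torsionBySet_iff _ _).1 hw ⟨a, ha⟩, map_zero]
    have hxq : x ∈ q := by
      refine hann ?_
      rw [Submodule.mem_colon_singleton, Submodule.mem_bot]
      exact Module.mem_annihilator.1 (QuotSMulTop.mem_annihilator M x) _
    have hqp := hq'.isPrime
    have hxp : x ∉ p := by
      rw [hpm]
      intro h0
      exact hm00 (hx (by simpa using h0))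
    have h1 := ih (QuotSMulTop x M) (fun r hr => hm r (by simp [hr])) hrs q hq'
    have h2 : ringKrullDim ((R ⧸ p) ⧸ Ideal.span {Ideal.Quotient.mk p x}) + 1 ≤
        ringKrullDim (R ⧸ p) := by
      apply ringKrullDim_quotient_succ_le_of_nonZeroDivisor
      apply mem_nonZeroDivisors_of_ne_zero
      rwa [Ne, Ideal.Quotient.eq_zero_iff_mem]
    let φ : ((R ⧸ p) ⧸ Ideal.span {Ideal.Quotient.mk p x}) →+* R ⧸ q :=
      Ideal.Quotient.lift _ (Ideal.Quotient.factor hpq) (by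
        intro a ha
        have : Ideal.span {Ideal.Quotient.mk p x} ≤ RingHom.ker (Ideal.Quotient.factor hpq) := by
          rw [Ideal.span_singleton_le_iff_mem, RingHom.mem_ker, Ideal.Quotient.factor_mk,
            Ideal.Quotient.eq_zero_iff_mem]
          exact hxq
        exact this ha)
    have hφ : Function.Surjective φ :=
      Ideal.Quotient.lift_surjective_of_surjective _ _ (Ideal.Quotient.factor_surjective hpq)
    have h3 := ringKrullDim_le_of_surjective φ hφ
    calc (((x :: rs).length : ℕ) : WithBot ℕ∞) = (rs.length : WithBot ℕ∞) + 1 := by simp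
      _ ≤ _ := add_le_add_left (h1.trans h3) 1
      _ ≤ _ := h2

lemma mn_cm {k : Type u} [Field k] {R : Type u} [CommRing R] [Algebra k R] [IsNoetherianRing R]
    [IsLocalRing R] (zs : List R) : ∀ (M : Type u) [AddCommGroup M] [Module R M]
    [Module.Finite R M] (I0 : Ideal R) (_ : I0 ≤ Module.annihilator R M)
    (_ : ∀ z ∈ zs, z ∈ maximalIdeal R) (_ : Module.Finite k (R ⧸ (I0 ⊔ Ideal.ofList zs)))
    (_ : ∃ rs : List R, rs.length = zs.length ∧ (∀ r ∈ rs, r ∈ maximalIdeal R) ∧ IsRegular M rs),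
    IsWeaklyRegular M zs := by
  classical
  induction zs with
  | nil => intro M _ _ _ I0 _ _ _ _; simp
  | cons z zs ih =>
    intro M _ _ _ I0 hI0 hm hfin hd
    have hzm : z ∈ maximalIdeal R := hm z (by simp)
    have hz : IsSMulRegular M z := by
      by_contra hcon
      have : z ∈ ⋃ p ∈ associatedPrimes R M, (p : Set R) := by
        rw [biUnion_associatedPrimes_eq_compl_regular]
        exact hcon
      simp only [Set.mem_iUnion] at this
      obtain ⟨p, hp, hzp⟩ := this
      obtain ⟨rs, hrl, hrm, hrr⟩ := hd
      have h1 := mn_le_dim_of_ass rs M hrm hrr p hp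
      have hpp : p.IsPrime := IsAssociatedPrime.isPrime hp
      have : IsLocalRing (R ⧸ p) := .of_surjective' (Ideal.Quotient.mk p) Ideal.Quotient.mk_surjective
      let S : Finset (R ⧸ p) := (zs.map (Ideal.Quotient.mk p)).toFinset
      have hS : (S : Set (R ⧸ p)) ⊆ maximalIdeal (R ⧸ p) := by
        intro s hs
        simp only [S, List.coe_toFinset, List.mem_map, Set.mem_ofPred_eq] at hs
        obtain ⟨a, ha, rfl⟩ := hs
        have := hm a (by simp [ha])
        by_contra hu
        have hu : IsUnit (Ideal.Quotient.mk p a) := by simpa using hu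
        obtain ⟨b, hb⟩ := hu.exists_right_inv
        obtain ⟨b, rfl⟩ := Ideal.Quotient.mk_surjective b
        rw [← map_mul, ← map_one (Ideal.Quotient.mk p), Ideal.Quotient.eq] at hb
        have h3 := le_maximalIdeal hpp.ne_top hb
        have h4 : (1 : R) ∈ maximalIdeal R := by
          have := Ideal.sub_mem _ (Ideal.mul_mem_right b _ this) h3
          simpa using this
        exact (Ideal.ne_top_iff_one _).1 (maximalIdeal.isMaximal R).ne_top h4
      have h2 := ringKrullDim_le_ringKrullDim_quotient_add_card S
        (by rwa [IsLocalRing.ringJacobson_eq_maximalIdeal])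
      have hcard : S.card ≤ zs.length := by
        simpa [S] using List.toFinset_card_le (zs.map (Ideal.Quotient.mk p))
      let φ : (R ⧸ (I0 ⊔ Ideal.ofList (z :: zs))) →ₐ[k] ((R ⧸ p) ⧸ Ideal.span (S : Set (R ⧸ p))) :=
        Ideal.Quotient.liftₐ _ ((Ideal.Quotient.mkₐ k _).comp (Ideal.Quotient.mkₐ k p)) (by
          have : I0 ⊔ Ideal.ofList (z :: zs) ≤ RingHom.ker
            ((Ideal.Quotient.mkₐ k (Ideal.span (S : Set (R ⧸ p)))).comp (Ideal.Quotient.mkₐ k p)) := by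
            refine sup_le ?_ (Ideal.span_le.2 ?_)
            · intro a ha
              have : a ∈ p := IsAssociatedPrime.annihilator_le hp
                (by rw [Submodule.annihilator_top]; exact hI0 ha)
              rw [← Ideal.Quotient.eq_zero_iff_mem] at this
              simp [RingHom.mem_ker, this]
            · intro a ha
              simp only [List.mem_cons, Set.mem_ofPred_eq] at ha
              rcases ha with rfl | ha
              · have : a ∈ p := hzp
                rw [← Ideal.Quotient.eq_zero_iff_mem] at this
                simp [RingHom.mem_ker, this]
              · simp only [SetLike.mem_coe, RingHom.mem_ker, AlgHom.comp_apply, Ideal.Quotient.mkₐ_eq_mk]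
                rw [Ideal.Quotient.eq_zero_iff_mem]
                apply Ideal.subset_span
                simp only [S, List.coe_toFinset, List.mem_map, Set.mem_ofPred_eq]
                exact ⟨a, ha, rfl⟩
          exact this)
      have hφ : Function.Surjective φ := by
        intro y
        obtain ⟨y, rfl⟩ := Ideal.Quotient.mk_surjective y
        obtain ⟨y, rfl⟩ := Ideal.Quotient.mk_surjective y
        exact ⟨Ideal.Quotient.mk _ y, rfl⟩
      have hfin' : Module.Finite k ((R ⧸ p) ⧸ Ideal.span (S : Set (R ⧸ p))) :=
        Module.Finite.of_surjective φ.toLinearMap hφ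
      have hart : IsArtinianRing ((R ⧸ p) ⧸ Ideal.span (S : Set (R ⧸ p))) :=
        IsArtinianRing.of_finite k _
      have h0 : ringKrullDim ((R ⧸ p) ⧸ Ideal.span (S : Set (R ⧸ p))) ≤ 0 := by
        have := (isArtinianRing_iff_isNoetherianRing_krullDimLE_zero.1 hart).2
        simpa using (Ring.krullDimLE_iff.1 this)
      have : ((zs.length + 1 : ℕ) : WithBot ℕ∞) ≤ ((zs.length : ℕ) : WithBot ℕ∞) := by
        calc ((zs.length + 1 : ℕ) : WithBot ℕ∞) = (rs.length : WithBot ℕ∞) := by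
              rw [hrl]; simp
          _ ≤ _ := h1
          _ ≤ _ := h2
          _ ≤ 0 + (S.card : WithBot ℕ∞) := add_le_add_left h0 _
          _ = (S.card : WithBot ℕ∞) := zero_add _
          _ ≤ _ := by exact_mod_cast hcard
      have : zs.length + 1 ≤ zs.length := by exact_mod_cast this
      omega
    refine (isWeaklyRegular_cons_iff M z zs).2 ⟨hz, ?_⟩
    refine ih (QuotSMulTop z M) (I0 ⊔ Ideal.span {z}) ?_ (fun a ha => hm a (by simp [ha])) ?_
      (mn_depth_drop M zs.length (by simpa using hd) z hzm hz)
    · refine sup_le (fun a ha => ?_) ((Ideal.span_singleton_le_iff_mem _).2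
        (QuotSMulTop.mem_annihilator M z))
      rw [Module.mem_annihilator]
      intro w
      obtain ⟨w, rfl⟩ := Submodule.mkQ_surjective _ w
      rw [← map_smul, Module.mem_annihilator.1 (hI0 ha), map_zero]
    · rw [Ideal.ofList_cons, ← sup_assoc] at hfin
      exact hfin

lemma mn_poly_reg {σ : Type*} [DecidableEq σ] {k : Type u} [Field k] (i : σ)
    (I0 : Ideal (MvPolynomial {j // j ≠ i} k)) (p : Polynomial k) (hp : p.Monic)
    (g : MvPolynomial σ k)
    (hg : Polynomial.aeval (MvPolynomial.X i : MvPolynomial σ k) p * g ∈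
      I0.map (MvPolynomial.rename (Subtype.val : {j // j ≠ i} → σ)).toRingHom) :
    g ∈ I0.map (MvPolynomial.rename (Subtype.val : {j // j ≠ i} → σ)).toRingHom := by
  let e : MvPolynomial σ k ≃ₐ[k] Polynomial (MvPolynomial {j // j ≠ i} k) :=
    (MvPolynomial.renameEquiv k (Equiv.optionSubtypeNe i).symm).trans
      (MvPolynomial.optionEquivLeft k _)
  have he1 : (e.toRingEquiv.toRingHom).comp
      (MvPolynomial.rename (Subtype.val : {j // j ≠ i} → σ)).toRingHom = Polynomial.C := by
    apply MvPolynomial.ringHom_ext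
    · intro r
      simp [e, MvPolynomial.optionEquivLeft_C]
    · intro j
      simp [e, MvPolynomial.optionEquivLeft_X_some, j.2]
  have he2 : e (MvPolynomial.X i) = Polynomial.X := by
    simp [e, MvPolynomial.optionEquivLeft_X_none]
  have hmem : ∀ q : MvPolynomial σ k, q ∈ I0.map
      (MvPolynomial.rename (Subtype.val : {j // j ≠ i} → σ)).toRingHom ↔
      e q ∈ I0.map (Polynomial.C : _ →+* Polynomial (MvPolynomial {j // j ≠ i} k)) := by
    intro q
    rw [← he1, ← Ideal.map_map]
    constructor
    · intro h
      exact Ideal.mem_map_of_mem e.toRingEquiv.toRingHom h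
    · intro h
      obtain ⟨q', hq', h'⟩ := (Ideal.mem_map_iff_of_surjective e.toRingEquiv.toRingHom
        e.surjective).1 h
      have : q' = q := e.injective h'
      rwa [← this]
  have hker : ∀ q : Polynomial (MvPolynomial {j // j ≠ i} k),
      q ∈ I0.map (Polynomial.C : _ →+* Polynomial (MvPolynomial {j // j ≠ i} k)) ↔
      q.map (Ideal.Quotient.mk I0) = 0 := by
    intro q
    rw [Ideal.mem_map_C_iff, Polynomial.ext_iff]
    simp [Ideal.Quotient.eq_zero_iff_mem]
  rw [hmem, hker] at hg ⊢
  have h1 : e (Polynomial.aeval (MvPolynomial.X i : MvPolynomial σ k) p) =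
      p.map (algebraMap k (MvPolynomial {j // j ≠ i} k)) := by
    rw [← Polynomial.aeval_algHom_apply e, he2, Polynomial.aeval_def]
    rfl
  rw [map_mul, h1, Polynomial.map_mul, Polynomial.map_map] at hg
  exact ((hp.map _).mul_right_eq_zero_iff).1 hg

lemma mn_poly_ideal_eq {k : Type u} [Field k] (n : ℕ) (p : Fin n → Polynomial k) (i : Fin n) :
    Ideal.ofList (List.take i.1 (List.ofFn fun i =>
      Polynomial.aeval (MvPolynomial.X i : MvPolynomial (Fin n) k) (p i))) =
      (Ideal.span ((fun j : {j : Fin n // j ≠ i} =>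
        Polynomial.aeval (MvPolynomial.X j : MvPolynomial {j : Fin n // j ≠ i} k) (p j)) ''
          {j | j.1 < i})).map
        (MvPolynomial.rename (Subtype.val : {j : Fin n // j ≠ i} → Fin n)).toRingHom := by
  have h1 : ∀ j : {j : Fin n // j ≠ i},
      (MvPolynomial.rename (R := k) (Subtype.val : {j : Fin n // j ≠ i} → Fin n)).toRingHom
        (Polynomial.aeval (MvPolynomial.X j : MvPolynomial {j : Fin n // j ≠ i} k) (p j)) =
      Polynomial.aeval (MvPolynomial.X j.1 : MvPolynomial (Fin n) k) (p j) := by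
    intro j
    change MvPolynomial.rename (R := k) (Subtype.val : {j : Fin n // j ≠ i} → Fin n) _ = _
    rw [← Polynomial.aeval_algHom_apply, MvPolynomial.rename_X]
  rw [Ideal.map_span, ← Set.image_comp]
  apply le_antisymm
  · refine Ideal.span_le.2 ?_
    intro q hq
    rw [Set.mem_ofPred_eq, List.mem_take_iff_getElem] at hq
    obtain ⟨j, hj, rfl⟩ := hq
    rw [List.length_ofFn] at hj
    rw [List.getElem_ofFn]
    have hj1 : j < i.1 := by omega
    have hjn : j < n := by omega
    apply Ideal.subset_span
    refine ⟨⟨⟨j, hjn⟩, ?_⟩, hj1, ?_⟩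
    · intro h
      rw [← h] at hj1
      simp at hj1
    · exact h1 _
  · refine Ideal.span_le.2 ?_
    rintro _ ⟨j, hj, rfl⟩
    rw [Function.comp_apply, h1]
    have hj1 : j.1.1 < i.1 := hj
    apply Ideal.subset_span
    rw [Set.mem_ofPred_eq, List.mem_take_iff_getElem]
    refine ⟨j.1.1, ?_, ?_⟩
    · rw [List.length_ofFn]; omega
    · rw [List.getElem_ofFn]

lemma mn_poly_weaklyRegular {k : Type u} [Field k] (n : ℕ) (p : Fin n → Polynomial k)
    (hp : ∀ i, (p i).Monic) :
    IsWeaklyRegular (MvPolynomial (Fin n) k) (List.ofFn fun i =>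
      Polynomial.aeval (MvPolynomial.X i : MvPolynomial (Fin n) k) (p i)) := by
  rw [isWeaklyRegular_iff]
  intro i hi
  have hi' : i < n := by rwa [List.length_ofFn] at hi
  obtain ⟨i, rfl⟩ : ∃ i0 : Fin n, i0.1 = i := ⟨⟨i, hi'⟩, rfl⟩
  rw [isSMulRegular_quotient_iff_mem_of_smul_mem]
  intro g hg
  rw [smul_eq_mul, Ideal.mul_top, mn_poly_ideal_eq] at hg ⊢
  rw [List.getElem_ofFn] at hg
  exact mn_poly_reg i _ _ (hp _) g hg

lemma mn_finrank_pow {k : Type*} [Field k] {R : Type*} [CommRing R] [Algebra k R] (J : Ideal R)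
    (y : R) (hy : ∀ g, y * g ∈ J → g ∈ J) [Module.Finite k (R ⧸ (J ⊔ Ideal.span {y}))] (N : ℕ) :
    Module.Finite k (R ⧸ (J ⊔ Ideal.span {y ^ N})) ∧
    Module.finrank k (R ⧸ (J ⊔ Ideal.span {y ^ N})) =
      N * Module.finrank k (R ⧸ (J ⊔ Ideal.span {y})) := by
  have hyN : ∀ N : ℕ, ∀ g, y ^ N * g ∈ J → g ∈ J := by
    intro N
    induction N with
    | zero => intro g hg; simpa using hg
    | succ N ih =>
      intro g hg
      apply hy
      apply ih
      rwa [← mul_assoc, ← pow_succ]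
  have hmem : ∀ c g : R, g ∈ J ⊔ Ideal.span {c} ↔ ∃ a, g - a * c ∈ J := by
    intro c g
    rw [Submodule.mem_sup]
    constructor
    · rintro ⟨j, hj, z, hz, rfl⟩
      obtain ⟨a, rfl⟩ := Ideal.mem_span_singleton'.1 hz
      exact ⟨a, by simpa using hj⟩
    · rintro ⟨a, ha⟩
      exact ⟨_, ha, a * c, Ideal.mem_span_singleton'.2 ⟨a, rfl⟩, by ring⟩
  induction N with
  | zero =>
    have : J ⊔ Ideal.span {y ^ 0} = ⊤ := by simp
    rw [this]
    have : Subsingleton (R ⧸ (⊤ : Ideal R)) := Ideal.Quotient.subsingleton_iff.2 rfl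
    exact ⟨inferInstance, by rw [Module.finrank_zero_of_subsingleton, zero_mul]⟩
  | succ N ih =>
    obtain ⟨ih1, ih2⟩ := ih
    let f : (R ⧸ (J ⊔ Ideal.span {y})) →ₗ[R] (R ⧸ (J ⊔ Ideal.span {y ^ (N+1)})) :=
      Submodule.mapQ _ _ (LinearMap.mulLeft R (y ^ N)) (by
        intro g hg
        rw [Submodule.mem_comap, LinearMap.mulLeft_apply, hmem]
        obtain ⟨a, ha⟩ := (hmem _ _).1 hg
        refine ⟨a, ?_⟩
        have := J.mul_mem_left (y ^ N) ha
        convert this using 1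
        ring)
    have hf : Function.Injective f := by
      rw [injective_iff_map_eq_zero]
      intro x hx
      obtain ⟨g, rfl⟩ := Submodule.mkQ_surjective _ x
      change Submodule.Quotient.mk (y ^ N * g) = _ at hx
      rw [Submodule.Quotient.mk_eq_zero, hmem] at hx
      obtain ⟨a, ha⟩ := hx
      rw [Submodule.mkQ_apply, Submodule.Quotient.mk_eq_zero, hmem]
      refine ⟨a, hyN N _ ?_⟩
      convert ha using 1
      ring
    let π : (R ⧸ (J ⊔ Ideal.span {y ^ (N+1)})) →ₗ[R] (R ⧸ (J ⊔ Ideal.span {y ^ N})) :=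
      Submodule.mapQ _ _ LinearMap.id (by
        intro g hg
        rw [Submodule.mem_comap, LinearMap.id_apply, hmem]
        obtain ⟨a, ha⟩ := (hmem _ _).1 hg
        refine ⟨a * y, ?_⟩
        convert ha using 1
        ring)
    have hπ : Function.Surjective π := by
      intro x
      obtain ⟨g, rfl⟩ := Submodule.mkQ_surjective _ x
      exact ⟨Submodule.mkQ _ g, rfl⟩
    have hk : LinearMap.range f = LinearMap.ker π := by
      ext x
      obtain ⟨g, rfl⟩ := Submodule.mkQ_surjective _ x
      constructor
      · rintro ⟨z, hz⟩
        obtain ⟨z, rfl⟩ := Submodule.mkQ_surjective _ z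
        rw [← hz]
        change Submodule.Quotient.mk (y ^ N * z) = _
        rw [Submodule.Quotient.mk_eq_zero, hmem]
        exact ⟨z, by ring_nf; simp⟩
      · intro h
        change Submodule.Quotient.mk g = _ at h
        rw [Submodule.Quotient.mk_eq_zero, hmem] at h
        obtain ⟨a, ha⟩ := h
        refine ⟨Submodule.mkQ _ a, ?_⟩
        change Submodule.Quotient.mk (y ^ N * a) = Submodule.Quotient.mk g
        rw [Submodule.Quotient.eq, hmem]
        refine ⟨0, ?_⟩
        have := J.neg_mem ha
        convert this using 1
        ring
    let fk := f.restrictScalars k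
    let πk := π.restrictScalars k
    have hkk : LinearMap.range fk = LinearMap.ker πk := by
      ext x
      have := SetLike.ext_iff.1 hk x
      exact this
    let e1 := (LinearEquiv.ofInjective fk hf).trans (LinearEquiv.ofEq _ _ hkk)
    let e2 := πk.quotKerEquivOfSurjective hπ
    have i1 : Module.Finite k (LinearMap.ker πk) := Module.Finite.equiv e1
    have i2 : Module.Finite k ((R ⧸ (J ⊔ Ideal.span {y ^ (N+1)})) ⧸ LinearMap.ker πk) :=
      Module.Finite.equiv e2.symm
    have i3 : Module.Finite k (R ⧸ (J ⊔ Ideal.span {y ^ (N+1)})) :=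
      Module.Finite.of_submodule_quotient (LinearMap.ker πk)
    refine ⟨i3, ?_⟩
    rw [← Submodule.finrank_quotient_add_finrank (LinearMap.ker πk), e2.finrank_eq,
      ← e1.finrank_eq, ih2]
    ring

lemma mn_key {k : Type u} [Field k] {A : Type u} [CommRing A] [Algebra k A] [IsNoetherianRing A]
    [IsLocalRing A] (n : ℕ)
    (hd : ∃ rs : List A, rs.length = n ∧ (∀ r ∈ rs, r ∈ maximalIdeal A) ∧ IsRegular A rs)
    (y : Fin n → A) (hy : ∀ i, y i ∈ maximalIdeal A)
    (hfin : Module.Finite k (A ⧸ Ideal.span (Set.range y))) (i : Fin n) (g : A)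
    (hg : y i * g ∈ Ideal.span (y '' {j | j ≠ i})) : g ∈ Ideal.span (y '' {j | j ≠ i}) := by
  classical
  let zs : List A := ((List.finRange n).erase i).map y
  have hzs : Ideal.ofList zs = Ideal.span (y '' {j | j ≠ i}) := by
    unfold Ideal.ofList
    congr 1
    ext a
    simp [zs, (List.nodup_finRange n).mem_erase_iff]
  have hall : Ideal.ofList (zs ++ [y i]) = Ideal.span (Set.range y) := by
    rw [Ideal.ofList_append, hzs, Ideal.ofList_singleton, ← Ideal.span_union]
    congr 1
    ext a
    constructor
    · rintro (⟨j, _, rfl⟩ | h)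
      · exact ⟨j, rfl⟩
      · exact ⟨i, h.symm⟩
    · rintro ⟨j, rfl⟩
      by_cases h : j = i
      · right; rw [h]; rfl
      · left; exact ⟨j, h, rfl⟩
  have hn : 0 < n := Fin.pos i
  have hlen : (zs ++ [y i]).length = n := by
    simp [zs, List.length_erase_of_mem (List.mem_finRange i)]
    omega
  have hw : IsWeaklyRegular A (zs ++ [y i]) := by
    apply mn_cm (k := k) _ A ⊥ bot_le
    · intro z hz
      simp only [zs, List.mem_append, List.mem_map, List.mem_singleton] at hz
      rcases hz with ⟨j, _, rfl⟩ | rfl <;> exact hy _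
    · rw [bot_sup_eq, hall]; exact hfin
    · rw [hlen]; exact hd
  have := ((isWeaklyRegular_append_iff _ _ _).1 hw).2
  rw [isWeaklyRegular_singleton_iff, isSMulRegular_quotient_iff_mem_of_smul_mem] at this
  have := this g
  rw [smul_eq_mul, smul_eq_mul, Ideal.mul_top, hzs] at this
  exact this hg

lemma mn_finrank_all {k : Type u} [Field k] {A : Type u} [CommRing A] [Algebra k A]
    [IsNoetherianRing A] [IsLocalRing A] (n : ℕ)
    (hd : ∃ rs : List A, rs.length = n ∧ (∀ r ∈ rs, r ∈ maximalIdeal A) ∧ IsRegular A rs)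
    (y : Fin n → A) (hy : ∀ i, y i ∈ maximalIdeal A)
    (hfin : Module.Finite k (A ⧸ Ideal.span (Set.range y))) (N : ℕ) (hN : N ≠ 0) :
    Module.Finite k (A ⧸ Ideal.span (Set.range fun i => y i ^ N)) ∧
    Module.finrank k (A ⧸ Ideal.span (Set.range fun i => y i ^ N)) =
      N ^ n * Module.finrank k (A ⧸ Ideal.span (Set.range y)) := by
  classical
  have main : ∀ S : Finset (Fin n),
      Module.Finite k (A ⧸ Ideal.span (Set.range fun i => y i ^ (if i ∈ S then N else 1))) ∧
      Module.finrank k (A ⧸ Ideal.span (Set.range fun i => y i ^ (if i ∈ S then N else 1))) =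
      N ^ S.card * Module.finrank k (A ⧸ Ideal.span (Set.range y)) := by
    intro S
    induction S using Finset.induction_on with
    | empty =>
      have h0 : (fun i => y i ^ (if i ∈ (∅ : Finset (Fin n)) then N else 1)) = y := by
        funext i; simp
      rw [h0]
      exact ⟨hfin, by simp⟩
    | insert i S hi ih =>
      obtain ⟨ih1, ih2⟩ := ih
      let w : Fin n → A := fun i => y i ^ (if i ∈ S then N else 1)
      let w' : Fin n → A := fun j => y j ^ (if j ∈ insert i S then N else 1)
      have hw : ∀ j, w j ∈ maximalIdeal A := by
        intro j
        apply Ideal.pow_mem_of_mem _ (hy j)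
        split_ifs <;> omega
      have hwi : w i = y i := by simp [w, hi]
      have hw'i : w' i = y i ^ N := by simp [w']
      have hww' : ∀ j, j ≠ i → w' j = w j := by
        intro j hj
        simp [w, w', hj]
      have hsp : ∀ v : Fin n → A, (∀ j, j ≠ i → v j = w j) → Ideal.span (Set.range v) =
          Ideal.span (w '' {j | j ≠ i}) ⊔ Ideal.span {v i} := by
        intro v hv
        rw [← Ideal.span_union]
        congr 1
        ext a
        constructor
        · rintro ⟨j, rfl⟩
          by_cases h : j = i
          · right; rw [h]; rfl
          · left; exact ⟨j, h, (hv j h).symm⟩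
        · rintro (⟨j, h, rfl⟩ | h)
          · exact ⟨j, hv j h⟩
          · exact ⟨i, h.symm⟩
      have hreg := mn_key (k := k) n hd w hw ih1 i
      change Module.Finite k (A ⧸ Ideal.span (Set.range w)) at ih1
      change Module.finrank k (A ⧸ Ideal.span (Set.range w)) = _ at ih2
      change Module.Finite k (A ⧸ Ideal.span (Set.range w')) ∧
        Module.finrank k (A ⧸ Ideal.span (Set.range w')) = _
      rw [hsp w (fun _ _ => rfl), hwi] at ih1 ih2
      rw [hwi] at hreg
      rw [hsp w' hww', hw'i]
      obtain ⟨h1, h2⟩ := mn_finrank_pow (k := k) _ (y i) hreg N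
      refine ⟨h1, ?_⟩
      rw [h2, ih2, Finset.card_insert_of_notMem hi]
      ring
  have h0 : (fun i => y i ^ (if i ∈ (Finset.univ : Finset (Fin n)) then N else 1)) =
      fun i => y i ^ N := by
    funext i; simp
  have h1 := main Finset.univ
  rw [h0, Finset.card_univ, Fintype.card_fin] at h1
  exact h1

lemma mn_trace {k : Type*} [Field k] {S : Type*} [CommRing S] [Nontrivial S] [Algebra k S]
    [Module.Finite k S] (I : Ideal S) (hI : I ≤ Ideal.jacobson ⊥) {Q : Type*} [AddCommGroup Q]
    [Module S Q] [Module k Q] [IsScalarTower k S Q] [Module.Finite k Q] (ν d : ℕ)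
    (hν : Module.finrank k (Q ⧸ (I • (⊤ : Submodule S Q))) = ν)
    (hS : Module.finrank k S ≤ d) (hQ : Module.finrank k Q = d * ν)
    (T1 T2 : Q →ₗ[S] Q) (h : S) (hT : T1 * T2 - T2 * T1 = h • (1 : Q →ₗ[S] Q)) :
    (ν : S) * h = 0 := by
  let b := Module.finBasisOfFinrankEq k (Q ⧸ (I • (⊤ : Submodule S Q))) hν
  choose e he using fun i => Submodule.mkQ_surjective (I • (⊤ : Submodule S Q)) (b i)
  let L : (Fin ν → S) →ₗ[S] Q := Fintype.linearCombination S e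
  have hfin : Module.Finite S Q := Module.Finite.of_restrictScalars_finite k S Q
  have hW : (⊤ : Submodule S Q) ≤ LinearMap.range L := by
    apply Submodule.le_of_le_smul_of_le_jacobson_bot Module.Finite.fg_top hI
    intro q _
    have h1 := b.sum_repr (Submodule.mkQ (I • (⊤ : Submodule S Q)) q)
    let c := b.repr (Submodule.mkQ (I • (⊤ : Submodule S Q)) q)
    have h2 : q - ∑ i, c i • e i ∈ I • (⊤ : Submodule S Q) := by
      rw [← Submodule.Quotient.mk_eq_zero, ← Submodule.mkQ_apply, map_sub, ← h1, sub_eq_zero]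
      rw [map_sum]
      refine Finset.sum_congr rfl fun i _ => ?_
      rw [← he i]
      rfl
    have h3 : ∑ i, c i • e i ∈ LinearMap.range L := by
      refine ⟨fun i => algebraMap k S (c i), ?_⟩
      simp [L, Fintype.linearCombination_apply]
    have := Submodule.add_mem_sup h3 h2
    simpa using this
  have hsurj : Function.Surjective L := LinearMap.range_eq_top.1 (top_le_iff.1 hW)
  have hfr : Module.finrank k (Fin ν → S) = Module.finrank k Q := by
    apply le_antisymm
    · rw [Module.finrank_pi_fintype, hQ]
      simp only [Finset.sum_const, Finset.card_univ, Fintype.card_fin, smul_eq_mul]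
      rw [mul_comm]
      exact Nat.mul_le_mul_right _ hS
    · exact LinearMap.finrank_le_finrank_of_surjective (f := L.restrictScalars k) hsurj
  have hinj : Function.Injective L :=
    (LinearMap.injective_iff_surjective_of_finrank_eq_finrank hfr
      (f := L.restrictScalars k)).2 hsurj
  let E : (Fin ν → S) ≃ₗ[S] Q := LinearEquiv.ofBijective L ⟨hinj, hsurj⟩
  have hfree : Module.Free S Q := Module.Free.of_equiv E
  have hrk : Module.finrank S Q = ν := by
    rw [← E.finrank_eq]; simp
  have h4 := congrArg (LinearMap.trace S Q) hT
  rw [map_sub, LinearMap.trace_mul_comm, sub_self, map_smul, LinearMap.trace_one, hrk] at h4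
  rw [mul_comm]
  exact h4.symm

lemma mn_mem_span_pow {k : Type*} [Field k] (n N : ℕ) (q : MvPolynomial (Fin n) k) :
    q ∈ Ideal.span (Set.range fun i => (MvPolynomial.X i : MvPolynomial (Fin n) k) ^ N) ↔
      ∀ s ∈ q.support, ∃ i, N ≤ s i := by
  have : (Set.range fun i => (MvPolynomial.X i : MvPolynomial (Fin n) k) ^ N) =
      (fun s => MvPolynomial.monomial s (1 : k)) '' (Set.range fun i => Finsupp.single i N) := by
    rw [← Set.range_comp]
    congr 1
    funext i
    simp [MvPolynomial.X_pow_eq_monomial]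
  rw [this, MvPolynomial.mem_ideal_span_monomial_image]
  simp

lemma mn_eq_zero_of_mem {k : Type*} [Field k] (n : ℕ) (q : MvPolynomial (Fin n) k)
    (h : ∀ N, N ≠ 0 →
      q ∈ Ideal.span (Set.range fun i => (MvPolynomial.X i : MvPolynomial (Fin n) k) ^ N)) :
    q = 0 := by
  by_contra hq
  obtain ⟨s, hs⟩ := (MvPolynomial.support_nonempty).2 hq
  obtain ⟨i, hi⟩ := (mn_mem_span_pow n _ q).1 (h ((∑ i, s i) + 1) (by omega)) s hs
  have := Finset.single_le_sum (f := fun i => s i) (fun _ _ => Nat.zero_le _) (Finset.mem_univ i)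
  omega

lemma mn_card {k : Type*} [Field k] (n N : ℕ) :
    Module.Finite k (MvPolynomial (Fin n) k ⧸
      Ideal.span (Set.range fun i => (MvPolynomial.X i : MvPolynomial (Fin n) k) ^ N)) ∧
    Module.finrank k (MvPolynomial (Fin n) k ⧸
      Ideal.span (Set.range fun i => (MvPolynomial.X i : MvPolynomial (Fin n) k) ^ N)) ≤ N ^ n := by
  let I := Ideal.span (Set.range fun i => (MvPolynomial.X i : MvPolynomial (Fin n) k) ^ N)
  let π := Ideal.Quotient.mkₐ k I
  let w : (Fin n → Fin N) → (MvPolynomial (Fin n) k ⧸ I) := fun t =>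
    π (MvPolynomial.monomial (Finsupp.equivFunOnFinite.symm fun i => (t i : ℕ)) 1)
  have hw : Submodule.span k (Set.range w) = ⊤ := by
    rw [eq_top_iff]
    intro x _
    obtain ⟨q, rfl⟩ := Ideal.Quotient.mk_surjective x
    change π q ∈ _
    rw [q.as_sum, map_sum]
    refine Submodule.sum_mem _ fun s _ => ?_
    have h1 : MvPolynomial.monomial s (MvPolynomial.coeff s q) =
        (MvPolynomial.coeff s q) • MvPolynomial.monomial s (1 : k) := by
      rw [MvPolynomial.smul_monomial, smul_eq_mul, mul_one]
    rw [h1, map_smul]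
    apply Submodule.smul_mem
    by_cases hs : ∃ i, N ≤ s i
    · have : MvPolynomial.monomial s (1 : k) ∈ I := by
        rw [mn_mem_span_pow]
        intro s' hs'
        have := MvPolynomial.support_monomial_subset hs'
        rw [Finset.mem_singleton] at this
        rwa [this]
      have h2 : π (MvPolynomial.monomial s (1 : k)) = 0 := Ideal.Quotient.eq_zero_iff_mem.2 this
      rw [h2]
      exact Submodule.zero_mem _
    · push Not at hs
      apply Submodule.subset_span
      refine ⟨fun i => ⟨s i, hs i⟩, ?_⟩
      simp only [w]
      congr 2
      ext i
      simp
  have hf : Module.Finite k (MvPolynomial (Fin n) k ⧸ I) :=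
    ⟨hw ▸ Submodule.fg_span (Set.finite_range w)⟩
  refine ⟨hf, ?_⟩
  have := finrank_range_le_card (R := k) w
  rw [Set.finrank, hw, finrank_top] at this
  simpa using this

lemma mn_ops {k A S Q P : Type*} [CommRing k] [CommRing A] [Algebra k A] [CommRing S] [CommRing Q]
    [CommRing P] [Algebra k P] [Algebra S Q] (πK : P →+* S) (πL : A →+* Q)
    (hK : Function.Surjective πK)
    (hL : Function.Surjective πL) (ev : P →ₐ[k] A)
    (hφ : ∀ p, algebraMap S Q (πK p) = πL (ev p))
    (D : Derivation k A A) (hDL : ∀ x, πL x = 0 → πL (D x) = 0)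
    (hDy : ∀ p, D (ev p) = 0) (a c : A) (h : P) (hac : c * D a = ev h) :
    ∃ T1 T2 : Q →ₗ[S] Q, T1 * T2 - T2 * T1 = πK h • (1 : Q →ₗ[S] Q) := by
  choose sec hsec using hL
  let DQ : Q → Q := fun x => πL (D (sec x))
  have hDQ : ∀ x, DQ (πL x) = πL (D x) := by
    intro x
    simp only [DQ]
    rw [← sub_eq_zero, ← map_sub, ← map_sub]
    apply hDL
    rw [map_sub, hsec, sub_self]
  have hL : Function.Surjective πL := fun x => ⟨_, hsec x⟩
  let DL : Q →ₗ[S] Q :=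
    { toFun := DQ
      map_add' := by
        intro u v
        obtain ⟨u, rfl⟩ := hL u
        obtain ⟨v, rfl⟩ := hL v
        rw [← map_add, hDQ, hDQ, hDQ, map_add, map_add]
      map_smul' := by
        intro s v
        obtain ⟨s, rfl⟩ := hK s
        obtain ⟨v, rfl⟩ := hL v
        rw [RingHom.id_apply, Algebra.smul_def, Algebra.smul_def, hφ, ← map_mul, hDQ, hDQ,
          Derivation.leibniz, hDy, smul_zero, add_zero, smul_eq_mul, map_mul] }
  have hDLa : ∀ x, DL (πL x) = πL (D x) := hDQ
  refine ⟨(LinearMap.mulLeft S (πL c)) * DL, LinearMap.mulLeft S (πL a), ?_⟩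
  ext x
  obtain ⟨x, rfl⟩ := hL x
  simp only [LinearMap.sub_apply, Module.End.mul_apply, LinearMap.mulLeft_apply,
    LinearMap.smul_apply, Module.End.one_apply]
  rw [Algebra.smul_def, hφ, ← hac, ← map_mul, hDLa, hDLa, ← map_mul, ← map_mul, ← map_mul,
    ← map_mul, ← map_sub, Derivation.leibniz]
  congr 1
  simp only [smul_eq_mul]
  ring

lemma mn_core_step {k A : Type u} [Field k] [CommRing A] [Algebra k A] (n N ν : ℕ) (hN : N ≠ 0)
    (y : Fin n → A)
    (hfin : Module.Finite k (A ⧸ Ideal.span (Set.range fun i => y i ^ N)))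
    (hν : Module.finrank k (A ⧸ Ideal.span (Set.range y)) = ν)
    (hQ : Module.finrank k (A ⧸ Ideal.span (Set.range fun i => y i ^ N)) = N ^ n * ν)
    (D : Derivation k A A) (hD : ∀ i, D (y i) = 0) (a c : A) (h : MvPolynomial (Fin n) k)
    (hac : c * D a = MvPolynomial.aeval y h) (hk : (ν : k) ≠ 0) :
    h ∈ Ideal.span (Set.range fun i => (MvPolynomial.X i : MvPolynomial (Fin n) k) ^ N) := by
  let K := Ideal.span (Set.range fun i => (MvPolynomial.X i : MvPolynomial (Fin n) k) ^ N)
  let L := Ideal.span (Set.range fun i => y i ^ N)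
  let S := MvPolynomial (Fin n) k ⧸ K
  let Q := A ⧸ L
  let φ : S →ₐ[k] Q := Ideal.quotientMapₐ L (MvPolynomial.aeval y) (by
    rw [Ideal.span_le]
    rintro _ ⟨i, rfl⟩
    simp only [SetLike.mem_coe, Ideal.mem_comap, map_pow, MvPolynomial.aeval_X]
    exact Ideal.subset_span ⟨i, rfl⟩)
  let : Algebra S Q := φ.toRingHom.toAlgebra
  have hφ : ∀ p, algebraMap S Q (Ideal.Quotient.mk K p) =
      Ideal.Quotient.mk L (MvPolynomial.aeval y p) := fun p => rfl
  have : IsScalarTower k S Q := IsScalarTower.of_algebraMap_eq fun r => (φ.commutes r).symm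
  have : Module.Finite k S := (mn_card n N).1
  have hKne : K ≠ ⊤ := by
    rw [Ne, Ideal.eq_top_iff_one, mn_mem_span_pow]
    intro hh
    obtain ⟨i, hi⟩ := hh 0 (by simp)
    simp at hi
    omega
  have : Nontrivial S := Ideal.Quotient.nontrivial_iff.2 hKne
  let I : Ideal S := Ideal.span (Set.range fun i => Ideal.Quotient.mk K (MvPolynomial.X i))
  have hI : I ≤ Ideal.jacobson ⊥ := by
    have h1 : I ≤ nilradical S := by
      rw [Ideal.span_le]
      rintro _ ⟨i, rfl⟩
      refine ⟨N, ?_⟩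
      rw [← map_pow]
      exact Ideal.Quotient.eq_zero_iff_mem.2 (Ideal.subset_span ⟨i, rfl⟩)
    exact h1.trans Ideal.radical_le_jacobson
  have hmap : I.map (algebraMap S Q) = (Ideal.span (Set.range y)).map (Ideal.Quotient.mk L) := by
    simp only [I]
    rw [Ideal.map_span, Ideal.map_span, ← Set.range_comp, ← Set.range_comp]
    congr 2
    funext i
    simp only [Function.comp]
    rw [hφ, MvPolynomial.aeval_X]
  have hν' : Module.finrank k (Q ⧸ (I • (⊤ : Submodule S Q))) = ν := by
    rw [← hν]
    let g : A →ₗ[k] (Q ⧸ (I • (⊤ : Submodule S Q))) :=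
      ((I • (⊤ : Submodule S Q)).mkQ.restrictScalars k).comp (Ideal.Quotient.mkₐ k L).toLinearMap
    have hg : Function.Surjective g :=
      (Submodule.mkQ_surjective _).comp Ideal.Quotient.mk_surjective
    have hker : LinearMap.ker g = (Ideal.span (Set.range y)).restrictScalars k := by
      ext x
      rw [LinearMap.mem_ker]
      change Submodule.mkQ (I • (⊤ : Submodule S Q)) (Ideal.Quotient.mk L x) = 0 ↔ _
      rw [Submodule.mkQ_apply, Submodule.Quotient.mk_eq_zero, Ideal.smul_top_eq_map, hmap]
      simp only [Submodule.restrictScalars_mem]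
      rw [← Ideal.mem_comap, Ideal.comap_map_of_surjective _ Ideal.Quotient.mk_surjective,
        ← RingHom.ker, Ideal.mk_ker, sup_eq_left.2]
      rw [Ideal.span_le]
      rintro _ ⟨i, rfl⟩
      have h5 : y i ∈ Ideal.span (Set.range y) := Ideal.subset_span ⟨i, rfl⟩
      exact Ideal.pow_mem_of_mem _ h5 _ (Nat.pos_of_ne_zero hN)
    rw [← (LinearMap.quotKerEquivOfSurjective g hg).finrank_eq, hker]
    rfl
  have hDL : ∀ x ∈ L, D x ∈ L := by
    intro x hx
    refine Submodule.span_induction (p := fun x _ => D x ∈ L) ?_ ?_ ?_ ?_ hx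
    · rintro _ ⟨i, rfl⟩
      simp [hD]
    · simp
    · intro u v _ _ hu hv
      rw [map_add]; exact L.add_mem hu hv
    · intro r u hu hu'
      rw [smul_eq_mul, Derivation.leibniz]
      exact L.add_mem (L.mul_mem_left _ hu') (by
        rw [smul_eq_mul, mul_comm]; exact L.mul_mem_left _ hu)
  have hDy : ∀ p : MvPolynomial (Fin n) k, D (MvPolynomial.aeval y p) = 0 := by
    intro p
    induction p using MvPolynomial.induction_on with
    | C r => simp
    | add p q hp hq => rw [map_add, map_add, hp, hq, add_zero]
    | mul_X p i hp => rw [map_mul, Derivation.leibniz, hp, MvPolynomial.aeval_X, hD]; simp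
  obtain ⟨T1, T2, hT⟩ := mn_ops (S := S) (Q := Q) (Ideal.Quotient.mk K) (Ideal.Quotient.mk L)
    Ideal.Quotient.mk_surjective Ideal.Quotient.mk_surjective (MvPolynomial.aeval y) hφ D
    (fun x hx => Ideal.Quotient.eq_zero_iff_mem.2 (hDL x (Ideal.Quotient.eq_zero_iff_mem.1 hx)))
    hDy a c h hac
  have key := mn_trace (k := k) I hI ν (N ^ n) hν' (mn_card n N).2 hQ T1 T2 _ hT
  have hu : IsUnit ((ν : ℕ) : S) := by
    have := (IsUnit.mk0 _ hk).map (algebraMap k S)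
    rwa [map_natCast] at this
  have := (hu.mul_right_eq_zero).1 key
  exact Ideal.Quotient.eq_zero_iff_mem.1 this

lemma mn_core {k A : Type u} [Field k] [CommRing A] [Algebra k A] [IsNoetherianRing A]
    [IsLocalRing A] (n : ℕ)
    (hd : ∃ rs : List A, rs.length = n ∧ (∀ r ∈ rs, r ∈ maximalIdeal A) ∧ IsRegular A rs)
    (y : Fin n → A) (hy : ∀ i, y i ∈ maximalIdeal A)
    (hfin : Module.Finite k (A ⧸ Ideal.span (Set.range y)))
    (hk : (Module.finrank k (A ⧸ Ideal.span (Set.range y)) : k) ≠ 0)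
    (D : Derivation k A A) (hD : ∀ i, D (y i) = 0) (a c : A) (h : MvPolynomial (Fin n) k)
    (hac : c * D a = MvPolynomial.aeval y h) : h = 0 := by
  apply mn_eq_zero_of_mem
  intro N hN
  obtain ⟨h1, h2⟩ := mn_finrank_all (k := k) n hd y hy hfin N hN
  exact mn_core_step n N _ hN y h1 rfl h2 D hD a c h hac hk

/-- extension of a derivation to a localization -/
lemma mn_ext_der {k B A : Type*} [CommRing k] [CommRing B] [CommRing A] [Algebra k B] [Algebra B A]
    [Algebra k A] [IsScalarTower k B A] (M : Submonoid B) [IsLocalization M A]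
    (d : Derivation k B B) :
    ∃ D : Derivation k A A, ∀ b, D (algebraMap B A b) = algebraMap B A (d b) := by
  have hsm : ∀ (b : B) (x : A), b • x = algebraMap B A b * x := fun b x => Algebra.smul_def b x
  let g : B →+* DualNumber A :=
    { toFun := fun b => TrivSqZeroExt.inl (algebraMap B A b) +
        TrivSqZeroExt.inr (algebraMap B A (d b))
      map_one' := by ext <;> simp
      map_zero' := by ext <;> simp
      map_add' := fun x z => by ext <;> simp [Algebra.smul_def]
      map_mul' := fun x z => by ext <;> simp [mul_comm, hsm] }
  have hg1 : ∀ b, (g b).fst = algebraMap B A b := fun b => by simp [g]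
  have hg2 : ∀ b, (g b).snd = algebraMap B A (d b) := fun b => by simp [g, hsm]
  have hu : ∀ s : M, IsUnit (g s) := fun s => by
    rw [TrivSqZeroExt.isUnit_iff_isUnit_fst, hg1]
    exact IsLocalization.map_units A s
  let G : A →+* DualNumber A := IsLocalization.lift hu
  have hG : ∀ b, G (algebraMap B A b) = g b := fun b => IsLocalization.lift_eq hu b
  have hG1 : ∀ x, (G x).fst = x := by
    have : ((TrivSqZeroExt.fstHom A A A).toRingHom.comp G) = RingHom.id A := by
      apply IsLocalization.ringHom_ext M
      ext b
      simp [hG, hg1]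
    intro x
    exact congrArg (fun h => h x) this
  have hGs : ∀ x z, (G (x * z)).snd = x * (G z).snd + z * (G x).snd := by
    intro x z
    rw [map_mul, TrivSqZeroExt.snd_mul, hG1, hG1]
    simp [mul_comm]
  have hGk : ∀ r : k, (G (algebraMap k A r)).snd = 0 := by
    intro r
    rw [IsScalarTower.algebraMap_apply k B A, hG, hg2]
    simp
  let D0 : A →ₗ[k] A :=
    { toFun := fun x => (G x).snd
      map_add' := fun x z => by simp
      map_smul' := fun r x => by
        rw [Algebra.smul_def, hGs, hGk]
        simp [Algebra.smul_def] }
  refine ⟨Derivation.mk' D0 fun x z => ?_, fun b => ?_⟩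
  · exact hGs x z
  · change (G _).snd = _
    rw [hG, hg2]

lemma mn_det_odd {R : Type*} [CommRing R] [CharP R 2] {n : ℕ} (hn : Odd n)
    (H : Matrix (Fin n) (Fin n) R) (hs : ∀ i j, H i j = H j i) (h0 : ∀ i, H i i = 0) :
    H.det = 0 := by
  let G : Matrix (Fin n) (Fin n) (MvPolynomial (Fin n × Fin n) ℤ) := Matrix.of fun i j =>
    if i < j then MvPolynomial.X (i, j) else if j < i then - MvPolynomial.X (j, i) else 0
  have hG : G.transpose = -G := by
    refine Matrix.ext fun i j => ?_
    simp only [Matrix.transpose_apply, Matrix.neg_apply, G, Matrix.of_apply]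
    rcases lt_trichotomy i j with h | h | h
    · simp [h, h.not_gt]
    · simp [h]
    · simp [h, h.not_gt]
  have hdet : G.det = 0 := by
    have h1 := congrArg Matrix.det hG
    rw [Matrix.det_transpose, Matrix.det_neg, Fintype.card_fin, hn.neg_one_pow] at h1
    have h2 : (2 : MvPolynomial (Fin n × Fin n) ℤ) * G.det = 0 := by linear_combination h1
    rcases mul_eq_zero.1 h2 with h3 | h3
    · exact absurd h3 two_ne_zero
    · exact h3
  let e : MvPolynomial (Fin n × Fin n) ℤ →+* R := MvPolynomial.eval₂Hom (Int.castRingHom R) (fun x => H x.1 x.2)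
  have hmap : e.mapMatrix G = H := by
    refine Matrix.ext fun i j => ?_
    simp only [RingHom.mapMatrix_apply, Matrix.map_apply, G, Matrix.of_apply]
    rcases lt_trichotomy i j with h | h | h
    · simp [h, e]
    · subst h; simp [h0]
    · simp only [h, h.not_gt, if_true, if_false, map_neg]
      simp only [e, MvPolynomial.coe_eval₂Hom, MvPolynomial.eval₂_X]
      rw [CharTwo.neg_eq, hs]
  rw [← hmap, ← RingHom.map_det, hdet, map_zero]

lemma mn_pderiv_comm {k : Type*} [CommRing k] {σ : Type*} (i j : σ) (f : MvPolynomial σ k) :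
    MvPolynomial.pderiv i (MvPolynomial.pderiv j f) =
      MvPolynomial.pderiv j (MvPolynomial.pderiv i f) := by
  classical
  have h : ⁅(MvPolynomial.pderiv i : Derivation k (MvPolynomial σ k) (MvPolynomial σ k)),
      (MvPolynomial.pderiv j : Derivation k (MvPolynomial σ k) (MvPolynomial σ k))⁆ = 0 := by
    apply MvPolynomial.derivation_ext
    intro l
    simp [Derivation.commutator_apply, MvPolynomial.pderiv_X, Pi.single_apply]
    split_ifs <;> simp
  have := congrArg (fun D => D f) h
  simpa [Derivation.commutator_apply, sub_eq_zero] using this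

lemma mn_pderiv_self {k : Type*} [CommRing k] [CharP k 2] {σ : Type*} (i : σ)
    (f : MvPolynomial σ k) :
    MvPolynomial.pderiv i (MvPolynomial.pderiv i f) = 0 := by
  classical
  induction f using MvPolynomial.induction_on' with
  | monomial s c =>
    rw [MvPolynomial.pderiv_monomial, MvPolynomial.pderiv_monomial]
    have : ((s i : ℕ) : k) * (((s - Finsupp.single i 1 : σ →₀ ℕ) i : ℕ) : k) = 0 := by
      rw [← Nat.cast_mul, CharP.cast_eq_zero_iff k 2]
      simp only [Finsupp.coe_tsub, Pi.sub_apply, Finsupp.single_eq_same]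
      exact (Nat.even_mul_pred_self _).two_dvd
    rw [mul_assoc, this]
    simp
  | add p q hp hq => rw [map_add, map_add, hp, hq, add_zero]

/-- **Proposition 3.21.** Let `k` be a perfect field of characteristic `2` and `n` an odd
positive integer.  Let `f ∈ k[X₁,…,Xₙ]`, let `J(f)` be its Jacobian ideal (generated by the
partial derivatives of `f`), and let `m ⊇ J(f)` be a maximal ideal such that the
localization at `m` of `k[X₁,…,Xₙ]/J(f)` is a nonzero finite-dimensional `k`-vector space
(so the corresponding closed point is an isolated singular point of `f : 𝔸ⁿ → 𝔸¹`).  Then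
the Milnor number — the `k`-dimension of this localization — is even. -/
theorem milnor_number_even_of_odd_dim_char_two
    (k : Type u) [Field k] [CharP k 2] [PerfectRing k 2]
    (n : ℕ) (hn : Odd n) (hnpos : 0 < n)
    (f : MvPolynomial (Fin n) k)
    (J : Ideal (MvPolynomial (Fin n) k))
    (hJ : J = Ideal.span (Set.range fun i => MvPolynomial.pderiv i f))
    (m : Ideal (MvPolynomial (Fin n) k)) [m.IsMaximal] (hJm : J ≤ m)
    -- `A` is the localization of `k[X₁,…,Xₙ]` at the maximal ideal `m`:
    (A : Type u) [CommRing A] [Algebra (MvPolynomial (Fin n) k) A]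
    [IsLocalization.AtPrime A m]
    [Algebra k A] [IsScalarTower k (MvPolynomial (Fin n) k) A]
    -- `I` is the ideal of `A` generated by `J(f)`, so `A ⧸ I` is the localization of
    -- `k[X₁,…,Xₙ]/J(f)` at `m`:
    (I : Ideal A) (hI : I = J.map (algebraMap (MvPolynomial (Fin n) k) A))
    (hne : Nontrivial (A ⧸ I)) (hfd : FiniteDimensional k (A ⧸ I)) :
    Even (Module.finrank k (A ⧸ I)) := by
  have hloc : IsLocalRing A := IsLocalization.AtPrime.isLocalRing A m
  have hnoe : IsNoetherianRing A := IsLocalization.isNoetherianRing m.primeCompl A inferInstance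
  let yB : Fin n → MvPolynomial (Fin n) k := fun i => MvPolynomial.pderiv i f
  let y : Fin n → A := fun i => algebraMap (MvPolynomial (Fin n) k) A (yB i)
  have hIy : I = Ideal.span (Set.range y) := by
    rw [hI, hJ, Ideal.map_span, ← Set.range_comp]
    rfl
  have hy : ∀ i, y i ∈ maximalIdeal A := fun i =>
    (IsLocalization.AtPrime.to_map_mem_maximal_iff A m (yB i)).2
      (hJm (hJ ▸ Ideal.subset_span ⟨i, rfl⟩))
  have hIm : I ≤ maximalIdeal A := IsLocalRing.le_maximalIdeal (Ideal.Quotient.nontrivial_iff.1 hne)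
  -- a regular sequence of length `n`
  have hd : ∃ rs : List A, rs.length = n ∧ (∀ r ∈ rs, r ∈ maximalIdeal A) ∧ IsRegular A rs := by
    let t : Fin n → A ⧸ I := fun i =>
      Ideal.Quotient.mk I (algebraMap (MvPolynomial (Fin n) k) A (MvPolynomial.X i))
    let p : Fin n → Polynomial k := fun i => minpoly k (t i)
    have hp : ∀ i, (p i).Monic := fun i => minpoly.monic (Algebra.IsIntegral.isIntegral (t i))
    have hmem : ∀ i, algebraMap (MvPolynomial (Fin n) k) A
        (Polynomial.aeval (MvPolynomial.X i) (p i)) ∈ maximalIdeal A := by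
      intro i
      apply hIm
      rw [← Ideal.Quotient.eq_zero_iff_mem]
      have h1 := minpoly.aeval k (t i)
      let ψ : MvPolynomial (Fin n) k →ₐ[k] A ⧸ I :=
        (Ideal.Quotient.mkₐ k I).comp (IsScalarTower.toAlgHom k (MvPolynomial (Fin n) k) A)
      change ψ _ = 0
      rw [← Polynomial.aeval_algHom_apply]
      exact h1
    have hmem' : ∀ r ∈ List.ofFn fun i => Polynomial.aeval
        (MvPolynomial.X i : MvPolynomial (Fin n) k) (p i), r ∈ m := by
      intro r hr
      obtain ⟨i, rfl⟩ := (List.mem_ofFn' _ _).1 hr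
      exact (IsLocalization.AtPrime.to_map_mem_maximal_iff A m _).1 (hmem i)
    refine ⟨_, ?_, ?_, (mn_poly_weaklyRegular n p hp).isRegular_of_isLocalization_of_mem A m hmem'⟩
    · simp
    · intro r hr
      obtain ⟨r', hr', rfl⟩ := List.mem_map.1 hr
      exact (IsLocalization.AtPrime.to_map_mem_maximal_iff A m _).2 (hmem' r' hr')
  have hfin : Module.Finite k (A ⧸ Ideal.span (Set.range y)) := hIy ▸ hfd
  by_contra hodd
  rw [Nat.not_even_iff_odd] at hodd
  have hk : (Module.finrank k (A ⧸ Ideal.span (Set.range y)) : k) ≠ 0 := by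
    rw [← hIy, Ne, CharP.cast_eq_zero_iff k 2]
    exact hodd.not_two_dvd_nat
  have hay : ∀ h : MvPolynomial (Fin n) k, MvPolynomial.aeval y h =
      algebraMap (MvPolynomial (Fin n) k) A (MvPolynomial.aeval yB h) := by
    intro h
    have := MvPolynomial.aeval_algebraMap_apply A yB h
    exact this
  have hinj : Function.Injective (algebraMap (MvPolynomial (Fin n) k) A) :=
    IsLocalization.injective A m.primeCompl_le_nonZeroDivisors
  -- the partial derivatives are algebraically independent
  have hind : AlgebraicIndependent k yB := by
    rw [algebraicIndependent_iff]
    intro h hh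
    refine mn_core (A := A) n hd y hy hfin hk 0 (fun _ => rfl) 0 0 h ?_
    rw [hay, hh]
    simp
  have hbasis : IsTranscendenceBasis k yB := by
    apply hind.isTranscendenceBasis_of_lift_trdeg_le_of_finite
    rw [MvPolynomial.trdeg_of_isDomain]
    simp
  have halg := hbasis.isAlgebraic
  -- the Hessian is degenerate
  let H : Matrix (Fin n) (Fin n) (MvPolynomial (Fin n) k) :=
    Matrix.of fun i j => MvPolynomial.pderiv j (MvPolynomial.pderiv i f)
  have hdet : H.det = 0 := mn_det_odd hn H (fun i j => mn_pderiv_comm j i f)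
    (fun i => mn_pderiv_self i f)
  obtain ⟨v, hv0, hv⟩ := Matrix.exists_mulVec_eq_zero_iff.2 hdet
  obtain ⟨j, hj⟩ := Function.ne_iff.1 hv0
  let d : Derivation k (MvPolynomial (Fin n) k) (MvPolynomial (Fin n) k) :=
    MvPolynomial.mkDerivation k v
  have hsum : ∀ g : MvPolynomial (Fin n) k, (∑ l, v l • (MvPolynomial.pderiv l :
      Derivation k (MvPolynomial (Fin n) k) (MvPolynomial (Fin n) k))) g =
      ∑ l, v l * MvPolynomial.pderiv l g := by
    intro g
    have h1 := map_sum (Derivation.coeFnAddMonoidHom (R := k) (A := MvPolynomial (Fin n) k)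
      (M := MvPolynomial (Fin n) k)) (fun l => v l • MvPolynomial.pderiv l) Finset.univ
    have h2 := congrFun h1 g
    rw [Finset.sum_apply] at h2
    exact h2
  have hdsum : ∀ g, d g = ∑ l, MvPolynomial.pderiv l g * v l := by
    intro g
    have hd2 : d = ∑ l, v l • MvPolynomial.pderiv l := by
      classical
      apply MvPolynomial.derivation_ext
      intro i
      rw [MvPolynomial.mkDerivation_X]
      rw [hsum]
      simp [MvPolynomial.pderiv_X, Pi.single_apply]
    rw [hd2, hsum]
    simp [mul_comm]
  obtain ⟨D, hD⟩ := mn_ext_der (A := A) m.primeCompl d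
  have hDy : ∀ i, D (y i) = 0 := by
    intro i
    change D (algebraMap _ A (yB i)) = 0
    rw [hD, hdsum]
    have := congrFun hv i
    simp only [Matrix.mulVec, dotProduct, H, Matrix.of_apply, Pi.zero_apply] at this
    rw [this, map_zero]
  obtain ⟨r, hr0, c, hc⟩ := (halg.isAlgebraic (v j)).exists_nonzero_dvd
    (mem_nonZeroDivisors_of_ne_zero hj)
  have hr : (r : MvPolynomial (Fin n) k) ∈ (MvPolynomial.aeval (R := k) yB).range := by
    rw [← Algebra.adjoin_range_eq_range_aeval]
    exact r.2
  obtain ⟨h, hh⟩ := hr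
  have hh0 : h = 0 := by
    refine mn_core (A := A) n hd y hy hfin hk D hDy (algebraMap (MvPolynomial (Fin n) k) A (MvPolynomial.X j))
      (algebraMap _ A c) h ?_
    rw [hay, hD, MvPolynomial.mkDerivation_X, ← map_mul, mul_comm]
    congr 1
    rw [← hc]
    exact hh.symm
  apply hr0
  apply Subtype.ext
  rw [← hh, hh0]
  simp
end
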